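/- Let [ξ, ξ'] = {ξ + λe^J : 0 ≤ λ ≤ μ} (with μ > 0) be an ordinary segment of the tropical edge E_K whose endpoint ξ' is a breakpoint, and let k be the hyperplane node of D_{ξ'} with degree (2,1) or (1,2). Then: (a) D_{ξ'} = D_{]ξ,ξ'[} ∪ {a_ent}, where D_{]ξ,ξ'[} is the common tangent digraph of the points of the open segment and a_ent is an arc between k and the unique element ℓ of argmax_{j∈J}(|W|_{kj} + ξ_j), directed from ℓ to k if λ⁺_k(ξ,J) < λ⁻_k(ξ,J) and from k to ℓ otherwise; (b) if [ξ', ξ''] is the next ordinary segment of E_K, then D_{]ξ',ξ''[} = D_{ξ'} ∖ {a_lev}, where a_lev is the unique arc incident to k in D_{ξ'} other than a_ent having the same orientation (toward or away from k) as a_ent; (c) the direction set J' of [ξ', ξ''] = {ξ' + λe^{J'} : 0 ≤ λ ≤ μ'} equals the set of coordinate nodes weakly connected to k in D_{ξ'} ∖ {a_lev}. -/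

import Mathlib

open scoped Classical

noncomputable section

/-- The tropical semiring `ℝ ∪ {−∞}` with max as addition, + as multiplication. -/
abbrev TT : Type := WithBot ℝ

/-- Tropical dot product `max_j (a j + x j)`. -/
def tdot {n : ℕ} (a x : Fin n → TT) : TT :=
  Finset.univ.sup fun j => a j + x j

/-- Tropical permanent of a square matrix over `TT`. -/
def tper {q : ℕ} (M : Fin q → Fin q → TT) : TT :=
  Finset.univ.sup fun σ : Equiv.Perm (Fin q) => ∑ i, M i (σ i)

/-- A square tropical matrix is tropically singular. -/
def TropSingular {q : ℕ} (M : Fin q → Fin q → TT) : Prop :=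
  tper M = ⊥ ∨ ∃ σ π : Equiv.Perm (Fin q), σ ≠ π ∧
    (∑ i, M i (σ i)) = tper M ∧ (∑ i, M i (π i)) = tper M

/-- An (unsigned) tropical matrix is tropically generic. -/
def TropGeneric {m n : ℕ} (M : Fin m → Fin n → TT) : Prop :=
  ∀ (q : ℕ) (r : Fin q → Fin m) (c : Fin q → Fin n),
    Function.Injective r → Function.Injective c →
    tper (fun i j => M (r i) (c j)) = ⊥ ∨ ¬ TropSingular (fun i j => M (r i) (c j))

/-- sign of an entry of a signed tropical matrix. -/
def esign (ap an : TT) : ℤ :=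
  if ap ≠ ⊥ then 1 else if an ≠ ⊥ then -1 else 0

/-- A signed square tropical matrix (pair of matrices) is tropically sign singular. -/
def TropSignSingular {q : ℕ} (Mp Mn : Fin q → Fin q → TT) : Prop :=
  tper (fun i j => max (Mp i j) (Mn i j)) = ⊥ ∨
  ∃ σ π : Equiv.Perm (Fin q),
    (∑ i, max (Mp i (σ i)) (Mn i (σ i))) = tper (fun i j => max (Mp i j) (Mn i j)) ∧
    (∑ i, max (Mp i (π i)) (Mn i (π i))) = tper (fun i j => max (Mp i j) (Mn i j)) ∧
    ((Equiv.Perm.sign σ : ℤ) * ∏ i, esign (Mp i (σ i)) (Mn i (σ i)))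
      ≠ ((Equiv.Perm.sign π : ℤ) * ∏ i, esign (Mp i (π i)) (Mn i (π i)))

/-- A signed tropical matrix is tropically sign generic. -/
def TropSignGeneric {m n : ℕ} (Mp Mn : Fin m → Fin n → TT) : Prop :=
  ∀ (q : ℕ) (r : Fin q → Fin m) (c : Fin q → Fin n),
    Function.Injective r → Function.Injective c →
    tper (fun i j => max (Mp (r i) (c j)) (Mn (r i) (c j))) = ⊥ ∨
    ¬ TropSignSingular (fun i j => Mp (r i) (c j)) (fun i j => Mn (r i) (c j))

/-- Tropical polyhedron `P(A,b)` given by a signed matrix/vector. -/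
def tropP {m n : ℕ} (Ap An : Fin m → Fin n → TT) (bp bn : Fin m → TT) :
    Set (Fin n → TT) :=
  {x | ∀ i, max (tdot (An i) x) (bn i) ≤ max (tdot (Ap i) x) (bp i)}


section Tangent

variable {m n : ℕ} (Wp Wn : Fin m → Fin (n + 1) → TT)

/-- Real vector viewed inside `T^{n+1}`. -/
def toT (x : Fin (n + 1) → ℝ) : Fin (n + 1) → TT := fun j => (x j : TT)

/-- Modulus of the signed matrix `W`. -/
def tmod : Fin m → Fin (n + 1) → TT := fun i j => max (Wp i j) (Wn i j)

/-- `i` is a hyperplane node of the tangent graph at `x`. -/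
def isHypNode (x : Fin (n + 1) → ℝ) (i : Fin m) : Prop :=
  tdot (Wp i) (toT x) = tdot (Wn i) (toT x) ∧ ⊥ < tdot (Wp i) (toT x)

/-- There is an edge between hyperplane node `i` and coordinate node `j`
in the tangent graph at `x`. -/
def isTEdge (x : Fin (n + 1) → ℝ) (i : Fin m) (j : Fin (n + 1)) : Prop :=
  isHypNode Wp Wn x i ∧ tmod Wp Wn i j + (x j : TT) = tdot (tmod Wp Wn i) (toT x)

/-- Vertices of the tangent (di)graph: hyperplane nodes on the left,
coordinate nodes on the right. -/
abbrev TGV (m n : ℕ) : Type := Sum (Fin m) (Fin (n + 1))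

/-- The (undirected) tangent graph at `x`. -/
def tangentGraph (x : Fin (n + 1) → ℝ) : SimpleGraph (TGV m n) :=
  SimpleGraph.fromRel fun u v =>
    match u, v with
    | Sum.inl i, Sum.inr j => isTEdge Wp Wn x i j
    | _, _ => False

/-- The arc relation of the tangent digraph at `x`: the edge between `i` and
`j` is directed from `j` to `i` when `W_{ij}` is tropically positive, and from
`i` to `j` when it is tropically negative. -/
def arcRel (x : Fin (n + 1) → ℝ) : TGV m n → TGV m n → Prop := fun u v =>
  match u, v with
  | Sum.inr j, Sum.inl i => isTEdge Wp Wn x i j ∧ Wp i j ≠ ⊥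
  | Sum.inl i, Sum.inr j => isTEdge Wp Wn x i j ∧ Wn i j ≠ ⊥
  | _, _ => False

end Tangent

section Pivot

variable {m n : ℕ}

/-- The tropical cone `C = {x : Wᵢ⁺⊙x ≥ Wᵢ⁻⊙x for all i}`. -/
def coneC (Wp Wn : Fin m → Fin (n + 1) → TT) : Set (Fin (n + 1) → TT) :=
  {x | ∀ i, tdot (Wn i) x ≤ tdot (Wp i) x}

/-- The `i`-th s-hyperplane `Hᵢ`. -/
def hypHS (Wp Wn : Fin m → Fin (n + 1) → TT) (i : Fin m) : Set (Fin (n + 1) → TT) :=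
  {x | tdot (Wp i) x = tdot (Wn i) x}

/-- The `i`-th half-space `Hᵢ^≥`. -/
def halfHS (Wp Wn : Fin m → Fin (n + 1) → TT) (i : Fin m) : Set (Fin (n + 1) → TT) :=
  {x | tdot (Wn i) x ≤ tdot (Wp i) x}

/-- The tropical edge `E_K = ⋂_{i ∈ K} Hᵢ ∩ C` (as a set). -/
def edgeEK (Wp Wn : Fin m → Fin (n + 1) → TT) (K : Finset (Fin m)) :
    Set (Fin (n + 1) → TT) :=
  {x | (∀ i ∈ K, x ∈ hypHS Wp Wn i) ∧ x ∈ coneC Wp Wn}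

/-- Indicator vector `e^J` of `J ⊆ [n+1]`. -/
def eJ (J : Finset (Fin (n + 1))) : Fin (n + 1) → ℝ := fun j => if j ∈ J then 1 else 0

/-- `e^J` (with `∅ ⊊ J ⊊ [n+1]`) is a feasible direction from `x` in `D`. -/
def Feasible (D : Set (Fin (n + 1) → TT)) (x : Fin (n + 1) → ℝ)
    (J : Finset (Fin (n + 1))) : Prop :=
  J ≠ ∅ ∧ J ≠ Finset.univ ∧
    ∃ μ : ℝ, 0 < μ ∧ ∀ lam : ℝ, 0 ≤ lam → lam ≤ μ → toT (x + lam • eJ J) ∈ D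

/-- `{ξ + λ e^J : 0 ≤ λ ≤ μ}` is an ordinary segment of the tropical edge
`E_K`: it is contained in `E_K` and is maximal in the direction `e^J`. -/
def IsOrdSeg (Wp Wn : Fin m → Fin (n + 1) → TT) (K : Finset (Fin m))
    (ξ : Fin (n + 1) → ℝ) (J : Finset (Fin (n + 1))) (μ : ℝ) : Prop :=
  0 < μ ∧ J ≠ ∅ ∧ J ≠ Finset.univ ∧
  (∀ lam : ℝ, 0 ≤ lam → lam ≤ μ → toT (ξ + lam • eJ J) ∈ edgeEK Wp Wn K) ∧
  (∀ ε : ℝ, 0 < ε → toT (ξ - ε • eJ J) ∉ edgeEK Wp Wn K) ∧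
  (∀ ε : ℝ, 0 < ε → toT (ξ + (μ + ε) • eJ J) ∉ edgeEK Wp Wn K)

/-- `x` is a breakpoint of `E_K`: an intermediate endpoint shared by two
consecutive ordinary segments. -/
def IsBreakpoint (Wp Wn : Fin m → Fin (n + 1) → TT) (K : Finset (Fin m))
    (x : Fin (n + 1) → ℝ) : Prop :=
  ∃ ξ J μ, IsOrdSeg Wp Wn K ξ J μ ∧ x = ξ + μ • eJ J ∧
    ∃ J' μ', IsOrdSeg Wp Wn K x J' μ' ∧ J ⊂ J'

/-- `x` lies in the relative interior of an ordinary segment of `E_K`. -/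
def InRelIntSeg (Wp Wn : Fin m → Fin (n + 1) → TT) (K : Finset (Fin m))
    (x : Fin (n + 1) → ℝ) : Prop :=
  ∃ ξ J μ, IsOrdSeg Wp Wn K ξ J μ ∧ ∃ lam : ℝ, 0 < lam ∧ lam < μ ∧ x = ξ + lam • eJ J

/-- Embedding of `TT = ℝ ∪ {−∞}` into `EReal`. -/
def tE : TT → EReal := WithBot.recBotCoe ⊥ (fun r => (r : EReal))

/-- `λ⁺_i(ξ,J) = (Wᵢ⁺⊙ξ) − max_{j∈J}(W⁺_{ij} + ξ_j)`, with `−(−∞) = +∞`. -/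
def lamP (Wp : Fin m → Fin (n + 1) → TT) (i : Fin m) (ξ : Fin (n + 1) → ℝ)
    (J : Finset (Fin (n + 1))) : EReal :=
  tE (tdot (Wp i) (toT ξ)) - tE (J.sup fun j => Wp i j + (ξ j : TT))

/-- `λ⁻_i(ξ,J) = (Wᵢ⁺⊙ξ) − max_{j∈J}(W⁻_{ij} + ξ_j)`, with `−(−∞) = +∞`. -/
def lamM (Wp Wn : Fin m → Fin (n + 1) → TT) (i : Fin m) (ξ : Fin (n + 1) → ℝ)
    (J : Finset (Fin (n + 1))) : EReal :=
  tE (tdot (Wp i) (toT ξ)) - tE (J.sup fun j => Wn i j + (ξ j : TT))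

/-- `argmax(Wᵢ⁺⊙ξ)`. -/
def argmaxP (Wp : Fin m → Fin (n + 1) → TT) (i : Fin m) (ξ : Fin (n + 1) → ℝ) :
    Set (Fin (n + 1)) :=
  {j | Wp i j + (ξ j : TT) = tdot (Wp i) (toT ξ)}

/-- `argmax(Wᵢ⁻⊙ξ)`. -/
def argmaxM (Wn : Fin m → Fin (n + 1) → TT) (i : Fin m) (ξ : Fin (n + 1) → ℝ) :
    Set (Fin (n + 1)) :=
  {j | Wn i j + (ξ j : TT) = tdot (Wn i) (toT ξ)}

/-- `Λ(ξ,J)`: candidate entering constraints. -/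
def entSet (Wp : Fin m → Fin (n + 1) → TT) (K : Finset (Fin m))
    (ξ : Fin (n + 1) → ℝ) (J : Finset (Fin (n + 1))) : Set (Fin m) :=
  {i | i ∉ K ∧ ∀ j ∈ J, j ∉ argmaxP Wp i ξ}

/-- `B(ξ,J)`: candidate breakpoint constraints. -/
def brkSet (Wp Wn : Fin m → Fin (n + 1) → TT) (K : Finset (Fin m))
    (ξ : Fin (n + 1) → ℝ) (J : Finset (Fin (n + 1))) : Set (Fin m) :=
  {i | i ∈ K ∧ (∀ j ∈ J, j ∉ argmaxP Wp i ξ) ∧ ∀ j ∈ J, j ∉ argmaxM Wn i ξ}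

/-- Coordinate nodes with an arc into hyperplane node `i`. -/
def degIn (Wp Wn : Fin m → Fin (n + 1) → TT) (x : Fin (n + 1) → ℝ) (i : Fin m) :
    Set (Fin (n + 1)) :=
  {j | arcRel Wp Wn x (Sum.inr j) (Sum.inl i)}

/-- Coordinate nodes with an arc out of hyperplane node `i`. -/
def degOut (Wp Wn : Fin m → Fin (n + 1) → TT) (x : Fin (n + 1) → ℝ) (i : Fin m) :
    Set (Fin (n + 1)) :=
  {j | arcRel Wp Wn x (Sum.inl i) (Sum.inr j)}

/-- Hyperplane node `i` has degree `(1,1)` in the tangent digraph at `x`. -/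
def deg11 (Wp Wn : Fin m → Fin (n + 1) → TT) (x : Fin (n + 1) → ℝ) (i : Fin m) : Prop :=
  (∃! j, j ∈ degIn Wp Wn x i) ∧ (∃! j, j ∈ degOut Wp Wn x i)

/-- Hyperplane node `i` has degree `(2,1)`. -/
def deg21 (Wp Wn : Fin m → Fin (n + 1) → TT) (x : Fin (n + 1) → ℝ) (i : Fin m) : Prop :=
  (degIn Wp Wn x i).ncard = 2 ∧ (∃! j, j ∈ degOut Wp Wn x i)

/-- Hyperplane node `i` has degree `(1,2)`. -/
def deg12 (Wp Wn : Fin m → Fin (n + 1) → TT) (x : Fin (n + 1) → ℝ) (i : Fin m) : Prop :=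
  (∃! j, j ∈ degIn Wp Wn x i) ∧ (degOut Wp Wn x i).ncard = 2

/-- The support of the tangent graph at `x`: all coordinate nodes together
with the hyperplane nodes. -/
def suppV (Wp Wn : Fin m → Fin (n + 1) → TT) (x : Fin (n + 1) → ℝ) : Set (TGV m n) :=
  {v | match v with
       | Sum.inl i => isHypNode Wp Wn x i
       | Sum.inr _ => True}

/-- The underlying undirected edge relation of the tangent graph. -/
def tedgeRel (Wp Wn : Fin m → Fin (n + 1) → TT) (x : Fin (n + 1) → ℝ) :
    TGV m n → TGV m n → Prop := fun u v =>
  match u, v with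
  | Sum.inl i, Sum.inr j => isTEdge Wp Wn x i j
  | _, _ => False

/-- The tangent graph with the hyperplane node `ℓ` (and its incident edges)
deleted. -/
def delNode (Wp Wn : Fin m → Fin (n + 1) → TT) (x : Fin (n + 1) → ℝ) (ℓ : Fin m) :
    SimpleGraph (TGV m n) :=
  SimpleGraph.fromRel fun u v =>
    tedgeRel Wp Wn x u v ∧ u ≠ Sum.inl ℓ ∧ v ≠ Sum.inl ℓ

/-- The tangent graph with the edge between hyperplane node `k` and coordinate
node `j` deleted. -/
def delEdge (Wp Wn : Fin m → Fin (n + 1) → TT) (x : Fin (n + 1) → ℝ) (k : Fin m)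
    (j : Fin (n + 1)) : SimpleGraph (TGV m n) :=
  SimpleGraph.fromRel fun u v =>
    tedgeRel Wp Wn x u v ∧ ¬(u = Sum.inl k ∧ v = Sum.inr j)

/-- Coordinate nodes weakly connected to hyperplane node `k` after deleting the
edge between `k` and `j`. -/
def reachJ (Wp Wn : Fin m → Fin (n + 1) → TT) (x : Fin (n + 1) → ℝ) (k : Fin m)
    (j : Fin (n + 1)) : Finset (Fin (n + 1)) :=
  Finset.univ.filter fun l => (delEdge Wp Wn x k j).Reachable (Sum.inl k) (Sum.inr l)

end Pivot

/-!
Genericity makes the tangent graph at every point a forest: along a cycle, the two perfect matchings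
would both attain the tropical permanent of a submatrix. Hence the number of edges plus the number
of classes of any labelling constant on components is at most the number of nodes.

At a relative interior point of a segment with direction `e^J`, membership of both neighbouring
points in `E_K` gives each hyperplane node two neighbours on the same side of `J`. The two labels
`J` and its complement then leave room only for the nodes `K`, each of degree two and none joining
`J` to its complement. At `ξ'` the same count leaves `k` as the only node of degree three. Moving
along `e^J` changes the argmax of a row only when it meets both `J` and its complement, so passing
from the open segments to `ξ'` gains exactly one edge at `k`: the one ending in `J` on the left, the
one ending outside `J'` on the right. Since `k` keeps one arc of each sign on both sides, these two
arcs have the same orientation. Finally, if the component of `k` to the right of `ξ'` were properly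
contained in `J'`, it would be a third label, one more than the count allows.
-/

open Finset

section IncidenceGraph

open SimpleGraph

variable {V ρ κ γ : Type*}

theorem ncard_edgeSet_add_one_le_of_isAcyclic [Finite V] [Nonempty V] {G : SimpleGraph V}
    (hG : G.IsAcyclic) : G.edgeSet.ncard + 1 ≤ Nat.card V := by
  obtain ⟨F, hGF, -, hF⟩ := connected_top.exists_isTree_le_of_le_of_isAcyclic le_top hG
  calc G.edgeSet.ncard + 1
    _ ≤ F.edgeSet.ncard + 1 := by gcongr; exact F.edgeSet.toFinite
    _ = Nat.card V := (isTree_iff_connected_and_card.mp hF).2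

theorem eq_of_reachable_of_forall_adj_eq {G : SimpleGraph V} {φ : V → γ}
    (hφ : ∀ u v, G.Adj u v → φ u = φ v) {u v : V} (h : G.Reachable u v) : φ u = φ v := by
  obtain ⟨p⟩ := h
  induction p with
  | nil => rfl
  | cons hadj _ ih => exact (hφ _ _ hadj).trans ih

theorem image_update_comp_eq_erase [Fintype V] {φ : V → γ} {u v : V} (huv : φ u ≠ φ v) :
    univ.image (Function.update id (φ v) (φ u) ∘ φ) = (univ.image φ).erase (φ v) := by
  ext z
  simp only [mem_image, mem_univ, true_and, Function.comp_apply, mem_erase, Function.update_apply,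
    id]
  grind

/- Joining two vertices of different colours and identifying these colours adds one edge, keeps the
graph acyclic and loses one colour. -/
theorem ncard_edgeSet_add_card_image_le_of_isAcyclic [Fintype V] {G : SimpleGraph V}
    (hG : G.IsAcyclic) (φ : V → γ) (hφ : ∀ u v, G.Adj u v → φ u = φ v) :
    G.edgeSet.ncard + #(univ.image φ) ≤ Fintype.card V := by
  induction hc : #(univ.image φ) generalizing G φ with
  | zero =>
    have : IsEmpty V := by simpa [univ_eq_empty_iff] using hc
    simp [Subsingleton.elim G ⊥]
  | succ c ih =>
    by_cases hconst : ∃ u v, φ u ≠ φ v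
    · obtain ⟨u, v, huv⟩ := hconst
      have hreach : ¬ G.Reachable u v := fun h => huv (eq_of_reachable_of_forall_adj_eq hφ h)
      have hcard : #(univ.image (Function.update id (φ v) (φ u) ∘ φ)) = c := by
        rw [image_update_comp_eq_erase huv, card_erase_of_mem (mem_image_of_mem φ (mem_univ v)),
          hc, Nat.add_sub_cancel]
      have hmerged : ∀ a b, (G ⊔ edge u v).Adj a b →
          (Function.update id (φ v) (φ u) ∘ φ) a = (Function.update id (φ v) (φ u) ∘ φ) b := by
        rintro a b (hab | hab)
        · simp only [Function.comp_apply, hφ a b hab]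
        · obtain ⟨⟨rfl, rfl⟩ | ⟨rfl, rfl⟩, -⟩ := (edge_adj ..).mp hab <;>
            simp [Function.update_of_ne huv]
      have hlt : G.edgeSet.ncard < (G ⊔ edge u v).edgeSet.ncard :=
        Set.ncard_lt_ncard (edgeSet_strict_mono
          (G.lt_sup_edge _ _ (ne_of_apply_ne φ huv) fun h => hreach h.reachable))
      have := ih (hG.sup_edge_of_not_reachable hreach) _ hmerged hcard
      lia
    · push Not at hconst
      have hle : #(univ.image φ) ≤ 1 := card_le_one.mpr (by simpa using hconst)
      have : Nonempty V := by
        rw [← univ_nonempty_iff, ← image_nonempty (f := φ), ← card_pos, hc]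
        exact c.succ_pos
      have := ncard_edgeSet_add_one_le_of_isAcyclic hG
      rw [Nat.card_eq_fintype_card] at this
      lia

/-- The bipartite graph of a set system `T`, with the rows `ρ` on the left, the elements `κ` on the
right, and an edge from `i` to each element of `T i`. -/
def incidenceGraph (T : ρ → Finset κ) : SimpleGraph (ρ ⊕ κ) :=
  SimpleGraph.fromRel fun u v => ∃ i, u = Sum.inl i ∧ ∃ j ∈ T i, v = Sum.inr j

variable {T : ρ → Finset κ}

theorem incidenceGraph_adj_inl_inr {i : ρ} {j : κ} :
    (incidenceGraph T).Adj (Sum.inl i) (Sum.inr j) ↔ j ∈ T i := by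
  simp [incidenceGraph]

theorem eq_of_incidenceGraph_adj {ψ : ρ ⊕ κ → γ}
    (hψ : ∀ i, ∀ j ∈ T i, ψ (Sum.inl i) = ψ (Sum.inr j)) {u v : ρ ⊕ κ}
    (h : (incidenceGraph T).Adj u v) : ψ u = ψ v := by
  rcases u with i | j <;> rcases v with i' | j'
  · simp [incidenceGraph] at h
  · exact hψ i j' (incidenceGraph_adj_inl_inr.mp h)
  · exact (hψ i' j (incidenceGraph_adj_inl_inr.mp h.symm)).symm
  · simp [incidenceGraph] at h

theorem isLeft_iff_of_incidenceGraph_adj {u v : ρ ⊕ κ} (h : (incidenceGraph T).Adj u v) :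
    v.isLeft ↔ ¬ u.isLeft := by
  rcases u with i | j <;> rcases v with i' | j' <;> simp_all [incidenceGraph]

theorem isLeft_getVert_iff_odd {j : κ} {v : ρ ⊕ κ} {G : SimpleGraph (ρ ⊕ κ)}
    (hG : G ≤ incidenceGraph T) (p : G.Walk (Sum.inr j) v) {s : ℕ} (hs : s ≤ p.length) :
    (p.getVert s).isLeft ↔ Odd s := by
  induction s with
  | zero => simp
  | succ s ih =>
    rw [isLeft_iff_of_incidenceGraph_adj (hG (p.adj_getVert_succ hs)), ih (by lia),
      Nat.odd_add_one]

theorem exists_getVert_eq_of_isPath {j : κ} {i : ρ} {G : SimpleGraph (ρ ⊕ κ)}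
    (hG : G ≤ incidenceGraph T) {p : G.Walk (Sum.inr j) (Sum.inl i)} (hp : p.IsPath) :
    ∃ (q : ℕ) (c : Fin (q + 1) → κ) (r : Fin (q + 1) → ρ), p.length = 2 * q + 1 ∧
      (∀ s : Fin (q + 1), p.getVert (2 * s) = Sum.inr (c s)) ∧
      (∀ s : Fin (q + 1), p.getVert (2 * s + 1) = Sum.inl (r s)) ∧
      Function.Injective c ∧ Function.Injective r := by
  have hodd : Odd p.length := by
    rw [← isLeft_getVert_iff_odd hG p le_rfl, p.getVert_length]; rfl
  obtain ⟨q, hq⟩ := hodd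
  have hcol : ∀ s : Fin (q + 1), ∃ j', p.getVert (2 * s) = Sum.inr j' := fun s => by
    rw [← Sum.isRight_iff, ← Sum.not_isLeft, Bool.not_eq_true, ← Bool.not_eq_true,
      isLeft_getVert_iff_odd hG p (by lia), Nat.not_odd_iff_even]
    exact even_two_mul _
  have hrow : ∀ s : Fin (q + 1), ∃ i', p.getVert (2 * s + 1) = Sum.inl i' := fun s => by
    rw [← Sum.isLeft_iff, isLeft_getVert_iff_odd hG p (by lia)]
    exact odd_two_mul_add_one _
  choose c hc using hcol
  choose r hr using hrow
  refine ⟨q, c, r, hq, hc, hr, fun s t hst => ?_, fun s t hst => ?_⟩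
  · have := hp.getVert_injOn (by simp; lia) (by simp; lia) ((hc s).trans (hst ▸ (hc t).symm))
    lia
  · have := hp.getVert_injOn (by simp; lia) (by simp; lia) ((hr s).trans (hst ▸ (hr t).symm))
    lia

/- A path from `j` to `i` avoiding the edge `ij` visits elements and rows alternately. Matching each
of its rows with the preceding element, or with the following one (and the last row `i` with `j`),
gives two matchings that differ by a rotation. -/
theorem isBridge_incidenceGraph
    (hT : ∀ (q : ℕ) (r : Fin q → ρ) (c : Fin q → κ), Function.Injective r → Function.Injective c →
      ∀ σ : Equiv.Perm (Fin q), (∀ s, c s ∈ T (r s)) → (∀ s, c (σ s) ∈ T (r s)) → σ = 1)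
    {i : ρ} {j : κ} (hij : j ∈ T i) : (incidenceGraph T).IsBridge s(Sum.inr j, Sum.inl i) := by
  rw [isBridge_iff]
  intro hreach
  obtain ⟨p, hp⟩ := hreach.exists_isPath
  have hle := (incidenceGraph T).deleteEdges_le {s(Sum.inr j, Sum.inl i)}
  obtain ⟨q, c, r, hq, hc, hr, hcinj, hrinj⟩ := exists_getVert_eq_of_isPath hle hp
  have hbefore : ∀ s, c s ∈ T (r s) := fun s => by
    have := p.adj_getVert_succ (i := 2 * s) (by lia)
    rw [hc, hr] at this
    exact incidenceGraph_adj_inl_inr.mp (hle this).symm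
  have hafter : ∀ s, c (finRotate (q + 1) s) ∈ T (r s) := by
    intro s
    induction s using Fin.lastCases with
    | last =>
      have hfirst : c 0 = j := Sum.inr_injective ((hc 0).symm.trans (by simp))
      have hlast : r (Fin.last q) = i :=
        Sum.inl_injective ((hr _).symm.trans (by simp [← hq]))
      rwa [finRotate_last, hfirst, hlast]
    | cast s =>
      have hsucc : p.getVert (2 * s + 1 + 1) = Sum.inr (c s.succ) := hc s.succ
      have := p.adj_getVert_succ (i := 2 * s.castSucc + 1) (by simp; lia)
      rw [hr, Fin.val_castSucc, hsucc] at this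
      rw [finRotate_apply, Fin.coeSucc_eq_succ]
      exact incidenceGraph_adj_inl_inr.mp (hle this)
  have hrot := hT (q + 1) r c hrinj hcinj (finRotate (q + 1)) hbefore hafter
  have hzero : Fin.last q = 0 := by
    simpa [finRotate_last] using (Equiv.congr_fun hrot (Fin.last q)).symm
  have hadj := p.adj_of_length_eq_one (by simp_all [Fin.ext_iff])
  simp [deleteEdges_adj] at hadj

theorem isAcyclic_incidenceGraph
    (hT : ∀ (q : ℕ) (r : Fin q → ρ) (c : Fin q → κ), Function.Injective r → Function.Injective c →
      ∀ σ : Equiv.Perm (Fin q), (∀ s, c s ∈ T (r s)) → (∀ s, c (σ s) ∈ T (r s)) → σ = 1) :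
    (incidenceGraph T).IsAcyclic := by
  refine isAcyclic_iff_forall_adj_isBridge.mpr ?_
  rintro (i | j) (i' | j') hadj
  · simp [incidenceGraph] at hadj
  · rw [Sym2.eq_swap]
    exact isBridge_incidenceGraph hT (incidenceGraph_adj_inl_inr.mp hadj)
  · exact isBridge_incidenceGraph hT (incidenceGraph_adj_inl_inr.mp hadj.symm)
  · simp [incidenceGraph] at hadj

theorem sum_card_le_ncard_edgeSet_incidenceGraph [Fintype ρ] [Finite κ] (T : ρ → Finset κ) :
    ∑ i, #(T i) ≤ (incidenceGraph T).edgeSet.ncard := by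
  have := Fintype.ofFinite κ
  rw [← card_sigma, ← coe_edgeFinset, Set.ncard_coe_finset]
  refine card_le_card_of_injOn (fun e => s(Sum.inl e.1, Sum.inr e.2)) ?_ ?_
  · rintro ⟨i, j⟩ h
    simpa [incidenceGraph_adj_inl_inr] using h
  · rintro ⟨i, j⟩ - ⟨i', j'⟩ - h
    simpa using h

end IncidenceGraph

section RowArgmax

variable {m N : ℕ} {κ γ : Type*} [Fintype κ] [DecidableEq γ]

/-- The finite entries `j` of a tropical row `w` at which `w j + x j` is maximal. -/
def rowArgmax (w : κ → TT) (x : κ → ℝ) : Finset κ :=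
  {j | w j ≠ ⊥ ∧ ∀ l, w l + (x l : TT) ≤ w j + (x j : TT)}

variable {w : κ → TT} {x : κ → ℝ} {j l : κ}

theorem mem_rowArgmax :
    j ∈ rowArgmax w x ↔ w j ≠ ⊥ ∧ ∀ l, w l + (x l : TT) ≤ w j + (x j : TT) := by
  simp [rowArgmax]

theorem mem_rowArgmax_iff_exists_coe :
    j ∈ rowArgmax w x ↔
      ∃ r : ℝ, w j = r ∧ ∀ l (s : ℝ), w l = s → s + x l ≤ r + x j := by
  rw [mem_rowArgmax]
  constructor
  · rintro ⟨hj, hmax⟩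
    obtain ⟨r, hr⟩ := WithBot.ne_bot_iff_exists.mp hj
    refine ⟨r, hr.symm, fun l s hs => ?_⟩
    have := hmax l
    rw [hs, ← hr] at this
    exact_mod_cast this
  · rintro ⟨r, hr, hmax⟩
    refine ⟨hr ▸ WithBot.coe_ne_bot, fun l => ?_⟩
    induction hl : w l using WithBot.recBotCoe with
    | bot => simp
    | coe s =>
      rw [hr]
      exact_mod_cast hmax l s hl

theorem add_eq_add_of_mem_rowArgmax (hj : j ∈ rowArgmax w x) (hl : l ∈ rowArgmax w x) :
    w j + (x j : TT) = w l + (x l : TT) :=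
  le_antisymm ((mem_rowArgmax.mp hl).2 j) ((mem_rowArgmax.mp hj).2 l)

theorem rowArgmax_nonempty (hw : ∃ j, w j ≠ ⊥) (x : κ → ℝ) : (rowArgmax w x).Nonempty := by
  obtain ⟨j, hj⟩ := hw
  obtain ⟨l, -, hl⟩ := exists_max_image univ (fun l => w l + (x l : TT)) ⟨j, mem_univ j⟩
  refine ⟨l, mem_rowArgmax.mpr ⟨fun hbot => hj ?_, fun l' => hl l' (mem_univ l')⟩⟩
  simpa [hbot] using hl j (mem_univ j)

/- Adding `x` columnwise changes all permutation sums by the same constant, so any permutation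
running through the row maxima attains the tropical permanent. -/
theorem TropGeneric.perm_eq_one {M : Fin m → Fin N → TT} (hM : TropGeneric M) (x : Fin N → ℝ)
    {q : ℕ} {r : Fin q → Fin m} {c : Fin q → Fin N} (hr : Function.Injective r)
    (hc : Function.Injective c) {σ : Equiv.Perm (Fin q)}
    (hid : ∀ i, c i ∈ rowArgmax (M (r i)) x) (hσ : ∀ i, c (σ i) ∈ rowArgmax (M (r i)) x) :
    σ = 1 := by
  have hshift : ∀ τ : Equiv.Perm (Fin q), ∑ i, (M (r i) (c (τ i)) + (x (c (τ i)) : TT)) =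
      ∑ i, M (r i) (c (τ i)) + ((∑ i, x (c i) : ℝ) : TT) := fun τ => by
    rw [sum_add_distrib, WithBot.coe_sum, ← Equiv.sum_comp τ fun i => (x (c i) : TT)]
  have hle : ∀ τ : Equiv.Perm (Fin q), ∑ i, M (r i) (c (τ i)) ≤ ∑ i, M (r i) (c i) := fun τ => by
    rw [← WithBot.add_le_add_iff_right WithBot.coe_ne_bot, ← hshift τ]
    exact (sum_le_sum fun i _ => (mem_rowArgmax.mp (hid i)).2 _).trans_eq (hshift 1)
  have heq : ∑ i, M (r i) (c (σ i)) = ∑ i, M (r i) (c i) := by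
    refine WithBot.add_right_cancel WithBot.coe_ne_bot ((hshift σ).symm.trans ?_)
    exact (sum_congr rfl fun i _ => add_eq_add_of_mem_rowArgmax (hσ i) (hid i)).trans (hshift 1)
  have hper : tper (fun i j => M (r i) (c j)) = ∑ i, M (r i) (c i) :=
    le_antisymm (Finset.sup_le fun τ _ => hle τ)
      (Finset.le_sup (f := fun τ : Equiv.Perm (Fin q) => ∑ i, M (r i) (c (τ i))) (mem_univ 1))
  by_contra hne
  rcases hM q r c hr hc with hbot | hsing
  · rw [hper, WithBot.sum_eq_bot_iff] at hbot
    obtain ⟨i, -, hi⟩ := hbot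
    exact (mem_rowArgmax.mp (hid i)).1 hi
  · exact hsing (Or.inr ⟨σ, 1, hne, heq.trans hper.symm, hper.symm⟩)

/- The tangent bipartite graph of a generic matrix is a forest, with at least as many components as
`φ` has values. -/
theorem TropGeneric.sum_card_add_card_image_le {M : Fin m → Fin N → TT} (hM : TropGeneric M)
    (x : Fin N → ℝ) {H : Finset (Fin m)} {T : Fin m → Finset (Fin N)}
    (hT : ∀ i ∈ H, T i ⊆ rowArgmax (M i) x) {φ : Fin N → γ}
    (hφ : ∀ i ∈ H, ∀ a ∈ T i, ∀ b ∈ T i, φ a = φ b) :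
    ∑ i ∈ H, #(T i) + #(univ.image φ) ≤ N + #H := by
  let ψ : H ⊕ Fin N → Set γ := Sum.elim (fun i => φ '' T i) fun j => {φ j}
  have hacyclic : (incidenceGraph fun i : H => T i).IsAcyclic :=
    isAcyclic_incidenceGraph fun q r c hr hc σ hid hσ =>
      hM.perm_eq_one x (Subtype.val_injective.comp hr) hc (fun s => hT _ (r s).2 (hid s))
        fun s => hT _ (r s).2 (hσ s)
  have hψ : ∀ (i : H) (j : Fin N), j ∈ T i → ψ (Sum.inl i) = ψ (Sum.inr j) := fun i j hj =>
    (Set.subset_singleton_iff.mpr (by rintro _ ⟨a, ha, rfl⟩; exact hφ i i.2 a ha j hj)).antisymm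
      (Set.singleton_subset_iff.mpr ⟨j, hj, rfl⟩)
  have himage : #(univ.image φ) ≤ #(univ.image ψ) := by
    rw [← card_image_of_injective (univ.image φ) (Set.singleton_injective (α := γ)), image_image]
    exact card_le_card (image_subset_iff.mpr fun j _ => mem_image_of_mem ψ (mem_univ (Sum.inr j)))
  calc ∑ i ∈ H, #(T i) + #(univ.image φ)
    _ = ∑ i : H, #(T i) + #(univ.image φ) := by rw [sum_coe_sort H fun i => #(T i)]
    _ ≤ (incidenceGraph fun i : H => T i).edgeSet.ncard + #(univ.image ψ) :=
      add_le_add (sum_card_le_ncard_edgeSet_incidenceGraph _) himage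
    _ ≤ Fintype.card (H ⊕ Fin N) := ncard_edgeSet_add_card_image_le_of_isAcyclic hacyclic ψ
      fun _ _ => eq_of_incidenceGraph_adj hψ
    _ = N + #H := by simp [add_comm]

end RowArgmax

section Motion

theorem rowArgmax_add_eq_filter {κ : Type*} [Fintype κ] {w : κ → TT} {x d : κ → ℝ} {t : κ}
    (ht : t ∈ rowArgmax w x) (hd : ∀ l, d l ≤ d t) :
    rowArgmax w (x + d) = {j ∈ rowArgmax w x | d j = d t} := by
  obtain ⟨r, hr, hmax⟩ := mem_rowArgmax_iff_exists_coe.mp ht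
  ext j
  simp only [mem_filter, mem_rowArgmax_iff_exists_coe, Pi.add_apply]
  constructor
  · rintro ⟨s, hs, hsmax⟩
    have hjt := hmax j s hs
    have htj := hsmax t r hr
    refine ⟨⟨s, hs, fun l z hz => ?_⟩, ?_⟩
    · linarith [hmax l z hz, hd j]
    · linarith [hd j]
  · rintro ⟨⟨s, hs, hsmax⟩, hdj⟩
    refine ⟨s, hs, fun l z hz => ?_⟩
    linarith [hsmax l z hz, hd l]

variable {n : ℕ} {w : Fin (n + 1) → TT} {x : Fin (n + 1) → ℝ} {J : Finset (Fin (n + 1))}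
  {j t u : Fin (n + 1)} {δ ε : ℝ}

theorem eJ_of_mem (h : j ∈ J) : eJ J j = 1 := if_pos h

theorem eJ_of_notMem (h : j ∉ J) : eJ J j = 0 := if_neg h

theorem rowArgmax_add_smul_eJ_of_mem (hδ : 0 < δ) (ht : t ∈ rowArgmax w x) (htJ : t ∈ J) :
    rowArgmax w (x + δ • eJ J) = rowArgmax w x ∩ J := by
  rw [rowArgmax_add_eq_filter ht]
  · ext j
    by_cases hj : j ∈ J <;> simp [eJ, hj, htJ, hδ.ne]
  · intro l
    by_cases hl : l ∈ J <;> simp [eJ, hl, htJ, hδ.le]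

theorem rowArgmax_eq_sdiff_of_notMem (hδ : 0 < δ) (ht : t ∈ rowArgmax w (x + δ • eJ J))
    (htJ : t ∉ J) : rowArgmax w x = rowArgmax w (x + δ • eJ J) \ J := by
  have hback : x = x + δ • eJ J + -(δ • eJ J) := by simp
  conv_lhs => rw [hback]
  rw [rowArgmax_add_eq_filter ht]
  · ext j
    by_cases hj : j ∈ J <;> simp [eJ, hj, htJ, hδ.ne']
  · intro l
    by_cases hl : l ∈ J <;> simp [eJ, hl, htJ, hδ.le]

/- The maximum over the complement of `J` is constant along `e^J` and the maximum over `J` grows at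
unit speed, so the two are equal at some time. -/
theorem exists_mem_rowArgmax_add_smul_eJ (ht : t ∈ rowArgmax w x) (htJ : t ∉ J)
    (hu : u ∈ rowArgmax w (x + ε • eJ J)) (huJ : u ∈ J) :
    ∃ δ, 0 ≤ δ ∧ δ ≤ ε ∧ t ∈ rowArgmax w (x + δ • eJ J) ∧ u ∈ rowArgmax w (x + δ • eJ J) := by
  obtain ⟨r, hr, hrmax⟩ := mem_rowArgmax_iff_exists_coe.mp ht
  obtain ⟨s, hs, hsmax⟩ := mem_rowArgmax_iff_exists_coe.mp hu
  simp only [Pi.add_apply, Pi.smul_apply, smul_eq_mul] at hsmax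
  rw [eJ_of_mem huJ] at hsmax
  have hle : ∀ l (z : ℝ), w l = z → z + (x l + (r + x t - (s + x u)) * eJ J l) ≤ r + x t := by
    intro l z hz
    have hout := hrmax l z hz
    have hin := hsmax l z hz
    by_cases hl : l ∈ J
    · rw [eJ_of_mem hl] at hin ⊢
      linarith
    · rw [eJ_of_notMem hl]
      linarith
  have hut := hrmax u s hs
  have htu := hsmax t r hr
  rw [eJ_of_notMem htJ] at htu
  refine ⟨r + x t - (s + x u), by linarith, by linarith, ?_, ?_⟩ <;>
    simp only [mem_rowArgmax_iff_exists_coe, Pi.add_apply, Pi.smul_apply, smul_eq_mul]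
  · exact ⟨r, hr, fun l z hz => by rw [eJ_of_notMem htJ]; linarith [hle l z hz]⟩
  · exact ⟨s, hs, fun l z hz => by rw [eJ_of_mem huJ]; linarith [hle l z hz]⟩

/-- `A` lies on one side of `J`, i.e. it does not meet both `J` and its complement. A row whose
argmax is one-sided keeps it under small moves along `e^J`. -/
def OneSided {κ : Type*} (A J : Finset κ) : Prop := A ⊆ J ∨ Disjoint A J

theorem OneSided.mem_iff_mem {κ : Type*} {A J : Finset κ} {a b : κ} (h : OneSided A J)
    (ha : a ∈ A) (hb : b ∈ A) : a ∈ J ↔ b ∈ J := by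
  rcases h with hsub | hdisj
  · exact iff_of_true (hsub ha) (hsub hb)
  · exact iff_of_false (disjoint_left.mp hdisj ha) (disjoint_left.mp hdisj hb)

theorem not_oneSided_iff {κ : Type*} {A J : Finset κ} :
    ¬ OneSided A J ↔ ∃ a ∈ A, ∃ b ∈ A, a ∈ J ∧ b ∉ J := by
  simp only [OneSided, not_or, not_subset, not_disjoint_iff]
  grind

theorem rowArgmax_eq_or_eq_sdiff_of_oneSided (hw : ∃ j, w j ≠ ⊥) (hε : 0 < ε)
    (hside : ∀ δ, 0 ≤ δ → δ < ε → OneSided (rowArgmax w (x + δ • eJ J)) J) :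
    rowArgmax w x = rowArgmax w (x + ε • eJ J) ∨
      rowArgmax w x = rowArgmax w (x + ε • eJ J) \ J := by
  have hside₀ : OneSided (rowArgmax w x) J := by simpa using hside 0 le_rfl hε
  obtain ⟨t, ht⟩ := rowArgmax_nonempty hw x
  by_cases htJ : t ∈ J
  · left
    rw [rowArgmax_add_smul_eJ_of_mem hε ht htJ, eq_comm, inter_eq_left]
    exact fun l hl => (hside₀.mem_iff_mem ht hl).mp htJ
  · right
    obtain ⟨u, hu⟩ := rowArgmax_nonempty hw (x + ε • eJ J)
    by_cases huJ : u ∈ J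
    · obtain ⟨δ, hδ₀, hδε, htδ, huδ⟩ := exists_mem_rowArgmax_add_smul_eJ ht htJ hu huJ
      rcases hδε.lt_or_eq with hlt | rfl
      · exact absurd (((hside δ hδ₀ hlt).mem_iff_mem htδ huδ).mpr huJ) htJ
      · exact rowArgmax_eq_sdiff_of_notMem hε htδ htJ
    · exact rowArgmax_eq_sdiff_of_notMem hε hu huJ

theorem rowArgmax_add_smul_eJ_eq_or_eq_inter_of_oneSided (hw : ∃ j, w j ≠ ⊥) (hε : 0 < ε)
    (hside : ∀ δ, 0 < δ → δ ≤ ε → OneSided (rowArgmax w (x + δ • eJ J)) J) :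
    rowArgmax w (x + ε • eJ J) = rowArgmax w x ∨
      rowArgmax w (x + ε • eJ J) = rowArgmax w x ∩ J := by
  obtain ⟨u, hu⟩ := rowArgmax_nonempty hw (x + ε • eJ J)
  by_cases huJ : u ∈ J
  · right
    obtain ⟨t, ht⟩ := rowArgmax_nonempty hw x
    by_cases htJ : t ∈ J
    · exact rowArgmax_add_smul_eJ_of_mem hε ht htJ
    · obtain ⟨δ, hδ₀, hδε, htδ, huδ⟩ := exists_mem_rowArgmax_add_smul_eJ ht htJ hu huJ
      rcases hδ₀.lt_or_eq with hlt | rfl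
      · exact absurd (((hside δ hlt hδε).mem_iff_mem htδ huδ).mpr huJ) htJ
      · exact rowArgmax_add_smul_eJ_of_mem hε (by simpa using huδ) huJ
  · left
    rw [rowArgmax_eq_sdiff_of_notMem hε hu huJ, eq_comm,
      Finset.sdiff_eq_self_iff_disjoint, disjoint_left]
    exact fun l hl hlJ => huJ (((hside ε hε le_rfl).mem_iff_mem hl hu).mp hlJ)

end Motion

section TangentNbrs

variable {m n : ℕ} {Wp Wn : Fin m → Fin (n + 1) → TT} {x : Fin (n + 1) → ℝ} {i : Fin m}
  {j : Fin (n + 1)}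

theorem add_le_tdot (a : Fin (n + 1) → TT) (x : Fin (n + 1) → ℝ) (j : Fin (n + 1)) :
    a j + (x j : TT) ≤ tdot a (toT x) :=
  Finset.le_sup (f := fun j => a j + toT x j) (mem_univ j)

theorem exists_add_eq_tdot (a : Fin (n + 1) → TT) (x : Fin (n + 1) → ℝ) :
    ∃ j, a j + (x j : TT) = tdot a (toT x) := by
  obtain ⟨j, -, hj⟩ := exists_mem_eq_sup univ univ_nonempty fun j => a j + toT x j
  exact ⟨j, hj.symm⟩

theorem mem_rowArgmax_iff_eq_tdot {w : Fin (n + 1) → TT} :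
    j ∈ rowArgmax w x ↔ w j ≠ ⊥ ∧ w j + (x j : TT) = tdot w (toT x) := by
  rw [mem_rowArgmax]
  refine and_congr_right fun _ => ⟨fun hmax => ?_, fun heq l => heq ▸ add_le_tdot w x l⟩
  exact le_antisymm (add_le_tdot w x j) (Finset.sup_le fun l _ => hmax l)

theorem tdot_max (a b : Fin (n + 1) → TT) (x : Fin (n + 1) → ℝ) :
    tdot (fun j => max (a j) (b j)) (toT x) = max (tdot a (toT x)) (tdot b (toT x)) := by
  simp only [tdot, max_add]
  exact Finset.sup_sup

theorem exists_mem_rowArgmax_max_of_tdot_le {a b : Fin (n + 1) → TT}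
    (hne : ∃ j, max (a j) (b j) ≠ ⊥) (h : tdot b (toT x) ≤ tdot a (toT x)) :
    ∃ j ∈ rowArgmax (fun j => max (a j) (b j)) x, a j ≠ ⊥ := by
  obtain ⟨t, ht⟩ := rowArgmax_nonempty hne x
  obtain ⟨htne, hteq⟩ := mem_rowArgmax_iff_eq_tdot.mp ht
  rw [tdot_max, max_eq_left h] at hteq
  obtain ⟨j, hj⟩ := exists_add_eq_tdot a x
  have hane : a j ≠ ⊥ := by
    rintro hbot
    rw [hbot, WithBot.bot_add, ← hteq, eq_comm, WithBot.add_eq_bot] at hj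
    simp_all
  refine ⟨j, mem_rowArgmax_iff_eq_tdot.mpr
    ⟨?_, le_antisymm (add_le_tdot (fun j => max (a j) (b j)) x j) ?_⟩, hane⟩
  · exact ne_bot_of_le_ne_bot hane (le_max_left _ _)
  · rw [tdot_max, max_eq_left h, ← hj]
    gcongr
    exact le_max_left _ _

variable (Wp Wn) in
/-- The entries attaining the maximum of row `i` of `|W|` at `x`; when `i` is a hyperplane node
these are its neighbours in the tangent graph. -/
def tangentNbrs (x : Fin (n + 1) → ℝ) (i : Fin m) : Finset (Fin (n + 1)) :=
  rowArgmax (tmod Wp Wn i) x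

variable (Wp Wn) in
/-- The hyperplane nodes of the tangent graph at `x`. -/
def hypNodes (x : Fin (n + 1) → ℝ) : Finset (Fin m) := {i | isHypNode Wp Wn x i}

theorem mem_hypNodes : i ∈ hypNodes Wp Wn x ↔ isHypNode Wp Wn x i := by simp [hypNodes]

theorem exists_tmod_ne_bot_of_mem_tangentNbrs (h : j ∈ tangentNbrs Wp Wn x i) :
    ∃ j, tmod Wp Wn i j ≠ ⊥ :=
  ⟨j, (mem_rowArgmax.mp h).1⟩

theorem exists_mem_tangentNbrs_pos (hrow : ∃ j, tmod Wp Wn i j ≠ ⊥)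
    (h : toT x ∈ halfHS Wp Wn i) : ∃ j ∈ tangentNbrs Wp Wn x i, Wp i j ≠ ⊥ :=
  exists_mem_rowArgmax_max_of_tdot_le hrow h

theorem exists_mem_tangentNbrs_neg (hrow : ∃ j, tmod Wp Wn i j ≠ ⊥)
    (h : toT x ∈ hypHS Wp Wn i) : ∃ j ∈ tangentNbrs Wp Wn x i, Wn i j ≠ ⊥ := by
  have hcomm : tmod Wp Wn i = fun j => max (Wn i j) (Wp i j) := funext fun j => max_comm _ _
  rw [hcomm] at hrow
  rw [tangentNbrs, hcomm]
  exact exists_mem_rowArgmax_max_of_tdot_le hrow (Eq.le h)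

theorem ne_bot_right_iff (hsign : ∀ i j, min (Wp i j) (Wn i j) = ⊥)
    (h : j ∈ tangentNbrs Wp Wn x i) : Wn i j ≠ ⊥ ↔ Wp i j = ⊥ := by
  have hne : tmod Wp Wn i j ≠ ⊥ := (mem_rowArgmax.mp h).1
  have hmin := hsign i j
  rw [tmod, Ne, _root_.max_eq_bot] at hne
  rw [_root_.min_eq_bot] at hmin
  tauto

theorem two_le_card_tangentNbrs (hsign : ∀ i j, min (Wp i j) (Wn i j) = ⊥)
    (hrow : ∃ j, tmod Wp Wn i j ≠ ⊥) (h : toT x ∈ hypHS Wp Wn i) :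
    2 ≤ #(tangentNbrs Wp Wn x i) := by
  obtain ⟨a, ha, hpos⟩ := exists_mem_tangentNbrs_pos hrow h.ge
  obtain ⟨b, hb, hneg⟩ := exists_mem_tangentNbrs_neg hrow h
  refine one_lt_card.mpr ⟨a, ha, b, hb, ?_⟩
  rintro rfl
  exact hpos ((ne_bot_right_iff hsign hb).mp hneg)

theorem isHypNode_iff_mem_hypHS (hrow : ∃ j, tmod Wp Wn i j ≠ ⊥) :
    isHypNode Wp Wn x i ↔ toT x ∈ hypHS Wp Wn i := by
  refine ⟨And.left, fun h => ⟨h, ?_⟩⟩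
  obtain ⟨j, -, hj⟩ := exists_mem_tangentNbrs_pos hrow h.ge
  refine lt_of_lt_of_le ?_ (add_le_tdot (Wp i) x j)
  rw [bot_lt_iff_ne_bot, Ne, WithBot.add_eq_bot]
  simpa using hj

theorem tdot_tmod_of_isHypNode (h : isHypNode Wp Wn x i) :
    tdot (tmod Wp Wn i) (toT x) = tdot (Wp i) (toT x) := by
  exact (tdot_max _ _ x).trans (max_eq_left h.1.ge)

theorem isTEdge_iff : isTEdge Wp Wn x i j ↔ i ∈ hypNodes Wp Wn x ∧ j ∈ tangentNbrs Wp Wn x i := by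
  rw [isTEdge, mem_hypNodes, tangentNbrs, mem_rowArgmax_iff_eq_tdot]
  refine and_congr_right fun hi => (and_iff_right_of_imp fun heq hbot => ?_).symm
  rw [hbot, WithBot.bot_add, tdot_tmod_of_isHypNode hi] at heq
  exact hi.2.ne heq

theorem exists_tmod_ne_bot_of_isHypNode (h : isHypNode Wp Wn x i) : ∃ j, tmod Wp Wn i j ≠ ⊥ := by
  obtain ⟨j, hj⟩ := exists_add_eq_tdot (tmod Wp Wn i) x
  exact exists_tmod_ne_bot_of_mem_tangentNbrs (isTEdge_iff.mp ⟨h, hj⟩).2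

end TangentNbrs

section Counting

theorem sum_add_mul_card_le_sum_add_mul_card {ι : Type*} {S H : Finset ι} {f : ι → ℕ} {c : ℕ}
    (hS : S ⊆ H) (hf : ∀ i ∈ H, c ≤ f i) : ∑ i ∈ S, f i + c * #H ≤ ∑ i ∈ H, f i + c * #S := by
  have hsdiff := card_nsmul_le_sum (H \ S) f c fun i hi => hf i (sdiff_subset hi)
  rw [← sum_sdiff hS, ← card_sdiff_add_card_eq_card hS, mul_add]
  rw [smul_eq_mul, mul_comm] at hsdiff
  lia

theorem two_le_card_image_mem {κ : Type*} [Fintype κ] {J : Finset κ} (hJ : J.Nonempty)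
    (hJ' : J ≠ univ) : 2 ≤ #(univ.image (· ∈ J)) := by
  obtain ⟨a, ha⟩ := hJ
  obtain ⟨b, hb⟩ : ∃ b, b ∉ J := by simpa [eq_univ_iff_forall] using hJ'
  exact one_lt_card.mpr ⟨_, mem_image_of_mem (· ∈ J) (mem_univ a), _,
    mem_image_of_mem (· ∈ J) (mem_univ b), by simp [ha, hb]⟩

theorem three_le_card_image_mem_prod {κ : Type*} [Fintype κ] {S J : Finset κ} (hS : S.Nonempty)
    (hSJ : S ⊂ J) (hJ : J ≠ univ) : 3 ≤ #(univ.image fun j => (j ∈ S, j ∈ J)) := by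
  obtain ⟨a, ha⟩ := hS
  obtain ⟨b, hbJ, hbS⟩ := exists_of_ssubset hSJ
  obtain ⟨c, hc⟩ : ∃ c, c ∉ J := by simpa [eq_univ_iff_forall] using hJ
  have hcS : c ∉ S := fun h => hc (hSJ.subset h)
  refine two_lt_card.mpr ⟨_, mem_image_of_mem _ (mem_univ a), _, mem_image_of_mem _ (mem_univ b),
    _, mem_image_of_mem _ (mem_univ c), ?_⟩
  simp [ha, hSJ.subset ha, hbJ, hbS, hc, hcS]

variable {m n : ℕ} {Wp Wn : Fin m → Fin (n + 1) → TT} {x : Fin (n + 1) → ℝ}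
  {H : Finset (Fin m)}

theorem TropGeneric.sum_card_tangentNbrs_le (hgen : TropGeneric (tmod Wp Wn)) :
    ∑ i ∈ H, #(tangentNbrs Wp Wn x i) ≤ n + #H := by
  have h := hgen.sum_card_add_card_image_le x (H := H) (fun i _ => subset_rfl)
    (φ := fun _ => ()) fun _ _ _ _ _ _ => rfl
  rw [image_const univ_nonempty, card_singleton] at h
  exact Nat.add_le_add_iff_right (n := 1) |>.mp (by simpa [tangentNbrs, add_right_comm] using h)

theorem TropGeneric.sum_card_add_one_le_of_oneSided (hgen : TropGeneric (tmod Wp Wn))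
    {J : Finset (Fin (n + 1))} (hJ : J.Nonempty) (hJ' : J ≠ univ)
    {T : Fin m → Finset (Fin (n + 1))} (hT : ∀ i ∈ H, T i ⊆ tangentNbrs Wp Wn x i)
    (hside : ∀ i ∈ H, OneSided (T i) J) : ∑ i ∈ H, #(T i) + 1 ≤ n + #H := by
  have h := hgen.sum_card_add_card_image_le x hT (φ := (· ∈ J))
    fun i hi a ha b hb => propext ((hside i hi).mem_iff_mem ha hb)
  have himage := two_le_card_image_mem hJ hJ'
  lia

end Counting

section EdgeSegment

variable {m n : ℕ} {Wp Wn : Fin m → Fin (n + 1) → TT} {K : Finset (Fin m)}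
  {x ξ : Fin (n + 1) → ℝ} {i : Fin m} {t : Fin (n + 1)} {J : Finset (Fin (n + 1))} {δ ε μ lam : ℝ}

theorem two_le_card_tangentNbrs_inter (hsign : ∀ i j, min (Wp i j) (Wn i j) = ⊥) (hε : 0 < ε)
    (ht : t ∈ tangentNbrs Wp Wn x i) (htJ : t ∈ J) (hup : toT (x + ε • eJ J) ∈ hypHS Wp Wn i) :
    2 ≤ #(tangentNbrs Wp Wn x i ∩ J) := by
  rw [tangentNbrs, ← rowArgmax_add_smul_eJ_of_mem hε ht htJ]
  exact two_le_card_tangentNbrs hsign (exists_tmod_ne_bot_of_mem_tangentNbrs ht) hup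

theorem two_le_card_tangentNbrs_sdiff (hsign : ∀ i j, min (Wp i j) (Wn i j) = ⊥) (hδ : 0 < δ)
    (ht : t ∈ tangentNbrs Wp Wn (ξ + δ • eJ J) i) (htJ : t ∉ J) (hdown : toT ξ ∈ hypHS Wp Wn i) :
    2 ≤ #(tangentNbrs Wp Wn (ξ + δ • eJ J) i \ J) := by
  rw [tangentNbrs, ← rowArgmax_eq_sdiff_of_notMem hδ ht htJ]
  exact two_le_card_tangentNbrs hsign (exists_tmod_ne_bot_of_mem_tangentNbrs ht) hdown

theorem exists_mem_tangentNbrs_pos_mem_iff (hδ : 0 < δ) (hε : 0 < ε)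
    (hdown : toT ξ ∈ halfHS Wp Wn i) (hup : toT (ξ + δ • eJ J + ε • eJ J) ∈ halfHS Wp Wn i)
    (ht : t ∈ tangentNbrs Wp Wn (ξ + δ • eJ J) i) :
    ∃ a ∈ tangentNbrs Wp Wn (ξ + δ • eJ J) i, Wp i a ≠ ⊥ ∧ (a ∈ J ↔ t ∈ J) := by
  have hrow := exists_tmod_ne_bot_of_mem_tangentNbrs ht
  by_cases htJ : t ∈ J
  · obtain ⟨a, ha, hpos⟩ := exists_mem_tangentNbrs_pos hrow hup
    rw [tangentNbrs, rowArgmax_add_smul_eJ_of_mem hε ht htJ, mem_inter] at ha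
    exact ⟨a, ha.1, hpos, iff_of_true ha.2 htJ⟩
  · obtain ⟨a, ha, hpos⟩ := exists_mem_tangentNbrs_pos hrow hdown
    rw [tangentNbrs, rowArgmax_eq_sdiff_of_notMem hδ ht htJ, mem_sdiff] at ha
    exact ⟨a, ha.1, hpos, iff_of_false ha.2 htJ⟩

theorem subset_hypNodes_of_mem_edgeEK (hrow : ∀ i ∈ K, ∃ j, tmod Wp Wn i j ≠ ⊥)
    (hx : toT x ∈ edgeEK Wp Wn K) : K ⊆ hypNodes Wp Wn x := fun i hi =>
  mem_hypNodes.mpr ((isHypNode_iff_mem_hypHS (hrow i hi)).mpr (hx.1 i hi))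

/-- `{ξ + λ e^J : 0 ≤ λ ≤ μ}` is a nondegenerate ordinary segment contained in `E_K`, not
necessarily maximal. -/
structure IsEdgeSegment (Wp Wn : Fin m → Fin (n + 1) → TT) (K : Finset (Fin m))
    (ξ : Fin (n + 1) → ℝ) (J : Finset (Fin (n + 1))) (μ : ℝ) : Prop where
  pos : 0 < μ
  nonempty : J.Nonempty
  ne_univ : J ≠ univ
  mem : ∀ lam, 0 ≤ lam → lam ≤ μ → toT (ξ + lam • eJ J) ∈ edgeEK Wp Wn K

theorem IsOrdSeg.isEdgeSegment (h : IsOrdSeg Wp Wn K ξ J μ) : IsEdgeSegment Wp Wn K ξ J μ :=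
  ⟨h.1, nonempty_iff_ne_empty.mpr h.2.1, h.2.2.1, h.2.2.2.1⟩

/-- The shape of the tangent graph at `x` in the relative interior of a segment of `E_K` with
direction `e^J`: the hyperplane nodes are `K`, each has degree two, and none joins `J` to its
complement. -/
structure IsRegularAlong (Wp Wn : Fin m → Fin (n + 1) → TT) (K : Finset (Fin m))
    (x : Fin (n + 1) → ℝ) (J : Finset (Fin (n + 1))) : Prop where
  hypNodes_eq : hypNodes Wp Wn x = K
  card_eq_two : ∀ i ∈ K, #(tangentNbrs Wp Wn x i) = 2
  oneSided : ∀ i ∈ K, OneSided (tangentNbrs Wp Wn x i) J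

namespace IsEdgeSegment

theorem mem_left (h : IsEdgeSegment Wp Wn K ξ J μ) : toT ξ ∈ edgeEK Wp Wn K := by
  simpa using h.mem 0 le_rfl h.pos.le

theorem mem_right (h : IsEdgeSegment Wp Wn K ξ J μ) (lam : ℝ) :
    toT (ξ + lam • eJ J + (μ - lam) • eJ J) ∈ edgeEK Wp Wn K := by
  simpa [add_assoc, ← add_smul] using h.mem μ h.pos.le le_rfl

theorem hypNodes_eq (h : IsEdgeSegment Wp Wn K ξ J μ)
    (hsign : ∀ i j, min (Wp i j) (Wn i j) = ⊥) (hrow : ∀ i ∈ K, ∃ j, tmod Wp Wn i j ≠ ⊥)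
    (hgen : TropGeneric (tmod Wp Wn)) (hK : #K + 1 = n) (h₀ : 0 < lam) (h₁ : lam < μ) :
    hypNodes Wp Wn (ξ + lam • eJ J) = K := by
  set x := ξ + lam • eJ J
  have hpair : ∀ i, ∃ T, i ∈ hypNodes Wp Wn x →
      T ⊆ tangentNbrs Wp Wn x i ∧ #T = 2 ∧ OneSided T J := fun i => by
    by_cases hi : i ∈ hypNodes Wp Wn x
    · have hhyp := mem_hypNodes.mp hi
      obtain ⟨b, hb, hneg⟩ :=
        exists_mem_tangentNbrs_neg (exists_tmod_ne_bot_of_isHypNode hhyp) hhyp.1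
      obtain ⟨a, ha, hpos, hab⟩ := exists_mem_tangentNbrs_pos_mem_iff h₀ (sub_pos.mpr h₁)
        (h.mem_left.2 i) ((h.mem_right lam).2 i) hb
      have hne : a ≠ b := by
        rintro rfl
        exact hpos ((ne_bot_right_iff hsign hb).mp hneg)
      refine ⟨{a, b}, fun _ => ⟨by grind, card_pair hne, ?_⟩⟩
      by_contra hside
      rw [not_oneSided_iff] at hside
      grind
    · exact ⟨∅, fun hi' => absurd hi' hi⟩
  choose T hT using hpair
  have hcount := hgen.sum_card_add_one_le_of_oneSided h.nonempty h.ne_univ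
    (fun i hi => (hT i hi).1) fun i hi => (hT i hi).2.2
  rw [sum_const_nat fun i hi => (hT i hi).2.1] at hcount
  exact (eq_of_subset_of_card_le
    (subset_hypNodes_of_mem_edgeEK hrow (h.mem lam h₀.le h₁.le)) (by lia)).symm

theorem oneSided (h : IsEdgeSegment Wp Wn K ξ J μ)
    (hsign : ∀ i j, min (Wp i j) (Wn i j) = ⊥) (hrow : ∀ i ∈ K, ∃ j, tmod Wp Wn i j ≠ ⊥)
    (hgen : TropGeneric (tmod Wp Wn)) (hK : #K + 1 = n) (h₀ : 0 < lam) (h₁ : lam < μ)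
    (hi : i ∈ K) : OneSided (tangentNbrs Wp Wn (ξ + lam • eJ J) i) J := by
  by_contra hside
  obtain ⟨a, ha, b, hb, haJ, hbJ⟩ := not_oneSided_iff.mp hside
  have hinter := two_le_card_tangentNbrs_inter hsign (sub_pos.mpr h₁) ha haJ
    ((h.mem_right lam).1 i hi)
  have hsdiff := two_le_card_tangentNbrs_sdiff hsign h₀ hb hbJ (h.mem_left.1 i hi)
  have hsplit := card_inter_add_card_sdiff (tangentNbrs Wp Wn (ξ + lam • eJ J) i) J
  have hsum := sum_add_mul_card_le_sum_add_mul_card (singleton_subset_iff.mpr hi) fun i hi =>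
    two_le_card_tangentNbrs hsign (hrow i hi) ((h.mem lam h₀.le h₁.le).1 i hi)
  have hcount := hgen.sum_card_tangentNbrs_le (H := K) (x := ξ + lam • eJ J)
  rw [sum_singleton, card_singleton] at hsum
  lia

theorem isRegularAlong (h : IsEdgeSegment Wp Wn K ξ J μ)
    (hsign : ∀ i j, min (Wp i j) (Wn i j) = ⊥) (hrow : ∀ i ∈ K, ∃ j, tmod Wp Wn i j ≠ ⊥)
    (hgen : TropGeneric (tmod Wp Wn)) (hK : #K + 1 = n) (h₀ : 0 < lam) (h₁ : lam < μ) :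
    IsRegularAlong Wp Wn K (ξ + lam • eJ J) J := by
  have hside : ∀ i ∈ K, OneSided (tangentNbrs Wp Wn (ξ + lam • eJ J) i) J := fun i hi =>
    h.oneSided hsign hrow hgen hK h₀ h₁ hi
  have htwo : ∀ i ∈ K, 2 ≤ #(tangentNbrs Wp Wn (ξ + lam • eJ J) i) := fun i hi =>
    two_le_card_tangentNbrs hsign (hrow i hi) ((h.mem lam h₀.le h₁.le).1 i hi)
  refine ⟨h.hypNodes_eq hsign hrow hgen hK h₀ h₁, fun i hi => ?_, hside⟩
  have hsum := sum_add_mul_card_le_sum_add_mul_card (singleton_subset_iff.mpr hi) htwo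
  have hcount := hgen.sum_card_add_one_le_of_oneSided h.nonempty h.ne_univ
    (fun i _ => subset_rfl) hside
  rw [sum_singleton, card_singleton] at hsum
  have := htwo i hi
  lia

end IsEdgeSegment

theorem IsRegularAlong.eq_of_oneSided (hreg : IsRegularAlong Wp Wn K x J)
    (hgen : TropGeneric (tmod Wp Wn)) (hK : #K + 1 = n) (hJ : J ≠ univ)
    {S : Finset (Fin (n + 1))} (hS : S.Nonempty) (hSJ : S ⊆ J)
    (hside : ∀ i ∈ K, OneSided (tangentNbrs Wp Wn x i) S) : S = J := by
  by_contra hne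
  have himage := three_le_card_image_mem_prod hS (hSJ.ssubset_of_ne hne) hJ
  have hcount := hgen.sum_card_add_card_image_le x (H := K) (T := tangentNbrs Wp Wn x)
    (fun i _ => subset_rfl) (φ := fun j => (j ∈ S, j ∈ J)) fun i hi a ha b hb =>
      Prod.ext (propext ((hside i hi).mem_iff_mem ha hb))
        (propext ((hreg.oneSided i hi).mem_iff_mem ha hb))
  rw [sum_const_nat hreg.card_eq_two] at hcount
  lia

end EdgeSegment

section BreakNode

variable {m n : ℕ} {Wp Wn : Fin m → Fin (n + 1) → TT} {K : Finset (Fin m)}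
  {x : Fin (n + 1) → ℝ} {k : Fin m}

/-- The shape of the tangent graph at a breakpoint `x` of `E_K`: the hyperplane nodes are `K`, and
all of them have degree two except `k`, which has degree three. -/
structure IsBreakNode (Wp Wn : Fin m → Fin (n + 1) → TT) (K : Finset (Fin m))
    (x : Fin (n + 1) → ℝ) (k : Fin m) : Prop where
  hypNodes_eq : hypNodes Wp Wn x = K
  mem : k ∈ K
  card_eq_three : #(tangentNbrs Wp Wn x k) = 3
  card_eq_two : ∀ i ∈ K, i ≠ k → #(tangentNbrs Wp Wn x i) = 2

theorem mem_degIn {j : Fin (n + 1)} : j ∈ degIn Wp Wn x k ↔ isTEdge Wp Wn x k j ∧ Wp k j ≠ ⊥ :=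
  Iff.rfl

theorem mem_degOut {j : Fin (n + 1)} : j ∈ degOut Wp Wn x k ↔ isTEdge Wp Wn x k j ∧ Wn k j ≠ ⊥ :=
  Iff.rfl

theorem ncard_degIn_add_ncard_degOut (hsign : ∀ i j, min (Wp i j) (Wn i j) = ⊥)
    (hk : k ∈ hypNodes Wp Wn x) :
    (degIn Wp Wn x k).ncard + (degOut Wp Wn x k).ncard = #(tangentNbrs Wp Wn x k) := by
  have hdisj : Disjoint (degIn Wp Wn x k) (degOut Wp Wn x k) := by
    refine Set.disjoint_left.mpr fun j hin hout => ?_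
    exact hin.2 ((ne_bot_right_iff hsign (isTEdge_iff.mp hin.1).2).mp hout.2)
  rw [← Set.ncard_union_eq hdisj, ← Set.ncard_coe_finset]
  congr 1
  ext j
  rw [Set.mem_union, mem_degIn, mem_degOut, isTEdge_iff, mem_coe]
  have := fun h => ne_bot_right_iff hsign (x := x) (i := k) (j := j) h
  tauto

theorem mem_hypNodes_of_deg (h : deg21 Wp Wn x k ∨ deg12 Wp Wn x k) : k ∈ hypNodes Wp Wn x := by
  rcases h with ⟨-, j, hj, -⟩ | ⟨⟨j, hj, -⟩, -⟩ <;> exact (isTEdge_iff.mp hj.1).1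

theorem card_tangentNbrs_of_deg (hsign : ∀ i j, min (Wp i j) (Wn i j) = ⊥)
    (h : deg21 Wp Wn x k ∨ deg12 Wp Wn x k) : #(tangentNbrs Wp Wn x k) = 3 := by
  rw [← ncard_degIn_add_ncard_degOut hsign (mem_hypNodes_of_deg h)]
  rcases h with ⟨hin, hout⟩ | ⟨hin, hout⟩
  · rw [hin, Set.ncard_eq_one.mpr (Set.singleton_iff_unique_mem.mpr hout)]
  · rw [hout, Set.ncard_eq_one.mpr (Set.singleton_iff_unique_mem.mpr hin)]

theorem isBreakNode_of_deg (hsign : ∀ i j, min (Wp i j) (Wn i j) = ⊥)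
    (hrow : ∀ i ∈ K, ∃ j, tmod Wp Wn i j ≠ ⊥) (hgen : TropGeneric (tmod Wp Wn))
    (hK : #K + 1 = n) (hx : toT x ∈ edgeEK Wp Wn K) (h : deg21 Wp Wn x k ∨ deg12 Wp Wn x k) :
    IsBreakNode Wp Wn K x k := by
  have hkH := mem_hypNodes_of_deg h
  have hthree := card_tangentNbrs_of_deg hsign h
  have hKH := subset_hypNodes_of_mem_edgeEK hrow hx
  have htwo : ∀ i ∈ hypNodes Wp Wn x, 2 ≤ #(tangentNbrs Wp Wn x i) := fun i hi =>
    have hhyp := mem_hypNodes.mp hi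
    two_le_card_tangentNbrs hsign (exists_tmod_ne_bot_of_isHypNode hhyp) hhyp.1
  have hcount := hgen.sum_card_tangentNbrs_le (H := hypNodes Wp Wn x) (x := x)
  have hcard : #(hypNodes Wp Wn x) ≤ #K := by
    have hsum := sum_add_mul_card_le_sum_add_mul_card (singleton_subset_iff.mpr hkH) htwo
    rw [sum_singleton, card_singleton] at hsum
    lia
  have hHK : hypNodes Wp Wn x = K := (eq_of_subset_of_card_le hKH hcard).symm
  refine ⟨hHK, hHK ▸ hkH, hthree, fun i hi hik => ?_⟩
  have hsum := sum_add_mul_card_le_sum_add_mul_card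
    (insert_subset (hKH hi) (singleton_subset_iff.mpr hkH)) htwo
  rw [sum_pair hik, card_pair hik] at hsum
  have := htwo i (hKH hi)
  rw [hHK] at hsum hcount
  lia

end BreakNode

section EdgeExchange

theorem exists_inter_eq_singleton_and_eq_erase {κ : Type*} [DecidableEq κ] {A B S : Finset κ}
    (hcard : #A = #B + 1) (h : B = A ∨ B = A \ S) : ∃ z, A ∩ S = {z} ∧ B = A.erase z := by
  rcases h with rfl | rfl
  · lia
  · have hsplit := card_inter_add_card_sdiff A S
    obtain ⟨z, hz⟩ := card_eq_one.mp (show #(A ∩ S) = 1 by lia)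
    exact ⟨z, hz, by rw [← sdiff_inter_self_left A S, hz, sdiff_singleton_eq_erase]⟩

variable {m n : ℕ} {Wp Wn : Fin m → Fin (n + 1) → TT} {K : Finset (Fin m)}
  {x y ξ : Fin (n + 1) → ℝ} {i k : Fin m} {J S : Finset (Fin (n + 1))} {μ lam : ℝ}

namespace IsEdgeSegment

theorem tangentNbrs_eq_or_eq_sdiff (h : IsEdgeSegment Wp Wn K ξ J μ)
    (hsign : ∀ i j, min (Wp i j) (Wn i j) = ⊥) (hrow : ∀ i ∈ K, ∃ j, tmod Wp Wn i j ≠ ⊥)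
    (hgen : TropGeneric (tmod Wp Wn)) (hK : #K + 1 = n) (h₀ : 0 < lam) (h₁ : lam < μ)
    (hi : i ∈ K) :
    tangentNbrs Wp Wn (ξ + lam • eJ J) i = tangentNbrs Wp Wn (ξ + μ • eJ J) i ∨
      tangentNbrs Wp Wn (ξ + lam • eJ J) i = tangentNbrs Wp Wn (ξ + μ • eJ J) i \ J := by
  have hend : ξ + μ • eJ J = ξ + lam • eJ J + (μ - lam) • eJ J := by
    rw [add_assoc, ← add_smul, add_sub_cancel]
  rw [hend]
  refine rowArgmax_eq_or_eq_sdiff_of_oneSided (hrow i hi) (sub_pos.mpr h₁) fun δ hδ₀ hδ₁ => ?_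
  rw [add_assoc, ← add_smul]
  exact h.oneSided hsign hrow hgen hK (by linarith) (by linarith) hi

theorem tangentNbrs_eq_or_eq_inter (h : IsEdgeSegment Wp Wn K ξ J μ)
    (hsign : ∀ i j, min (Wp i j) (Wn i j) = ⊥) (hrow : ∀ i ∈ K, ∃ j, tmod Wp Wn i j ≠ ⊥)
    (hgen : TropGeneric (tmod Wp Wn)) (hK : #K + 1 = n) (h₀ : 0 < lam) (h₁ : lam < μ)
    (hi : i ∈ K) :
    tangentNbrs Wp Wn (ξ + lam • eJ J) i = tangentNbrs Wp Wn ξ i ∨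
      tangentNbrs Wp Wn (ξ + lam • eJ J) i = tangentNbrs Wp Wn ξ i ∩ J :=
  rowArgmax_add_smul_eJ_eq_or_eq_inter_of_oneSided (hrow i hi) h₀ fun _ hδ₀ hδ₁ =>
    h.oneSided hsign hrow hgen hK hδ₀ (hδ₁.trans_lt h₁) hi

end IsEdgeSegment

namespace IsBreakNode

theorem exists_isTEdge_iff (hbr : IsBreakNode Wp Wn K x k) (hreg : IsRegularAlong Wp Wn K y J)
    (hT : ∀ i ∈ K, tangentNbrs Wp Wn y i = tangentNbrs Wp Wn x i ∨
      tangentNbrs Wp Wn y i = tangentNbrs Wp Wn x i \ S) :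
    ∃ z, tangentNbrs Wp Wn x k ∩ S = {z} ∧
      ∀ i j, isTEdge Wp Wn y i j ↔ isTEdge Wp Wn x i j ∧ ¬(i = k ∧ j = z) := by
  obtain ⟨z, hz, herase⟩ := exists_inter_eq_singleton_and_eq_erase
    (by rw [hbr.card_eq_three, hreg.card_eq_two k hbr.mem]) (hT k hbr.mem)
  have hother : ∀ i ∈ K, i ≠ k → tangentNbrs Wp Wn y i = tangentNbrs Wp Wn x i := fun i hi hik =>
    eq_of_subset_of_card_le (by rcases hT i hi with h | h <;> rw [h]; exact sdiff_subset)
      (by rw [hbr.card_eq_two i hi hik, hreg.card_eq_two i hi])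
  refine ⟨z, hz, fun i j => ?_⟩
  rw [isTEdge_iff, isTEdge_iff, hreg.hypNodes_eq, hbr.hypNodes_eq]
  by_cases hik : i = k
  · subst hik
    rw [herase, mem_erase]
    tauto
  · simp only [hik, false_and, not_false_iff, and_true]
    exact and_congr_right fun hi => by rw [hother i hi hik]

/- As `lam` varies the edge is the same, being determined by the intersection with `S`. -/
theorem exists_forall_isTEdge_iff (hbr : IsBreakNode Wp Wn K x k) {y : ℝ → Fin (n + 1) → ℝ}
    (hμ : 0 < μ) (hreg : ∀ lam, 0 < lam → lam < μ → IsRegularAlong Wp Wn K (y lam) J)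
    (hT : ∀ lam, 0 < lam → lam < μ → ∀ i ∈ K,
      tangentNbrs Wp Wn (y lam) i = tangentNbrs Wp Wn x i ∨
        tangentNbrs Wp Wn (y lam) i = tangentNbrs Wp Wn x i \ S) :
    ∃ z, tangentNbrs Wp Wn x k ∩ S = {z} ∧ ∀ lam, 0 < lam → lam < μ → ∀ i j,
      isTEdge Wp Wn (y lam) i j ↔ isTEdge Wp Wn x i j ∧ ¬(i = k ∧ j = z) := by
  have hex := fun lam h₀ h₁ => hbr.exists_isTEdge_iff (hreg lam h₀ h₁) (hT lam h₀ h₁)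
  obtain ⟨z, hz, -⟩ := hex (μ / 2) (half_pos hμ) (half_lt_self hμ)
  refine ⟨z, hz, fun lam h₀ h₁ => ?_⟩
  obtain ⟨z', hz', hiff⟩ := hex lam h₀ h₁
  obtain rfl : z = z' := singleton_injective (hz.symm.trans hz')
  exact hiff

theorem exists_entering (hbr : IsBreakNode Wp Wn K (ξ + μ • eJ J) k)
    (hseg : IsEdgeSegment Wp Wn K ξ J μ) (hsign : ∀ i j, min (Wp i j) (Wn i j) = ⊥)
    (hrow : ∀ i ∈ K, ∃ j, tmod Wp Wn i j ≠ ⊥) (hgen : TropGeneric (tmod Wp Wn))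
    (hK : #K + 1 = n) :
    ∃ z, tangentNbrs Wp Wn (ξ + μ • eJ J) k ∩ J = {z} ∧ ∀ lam, 0 < lam → lam < μ → ∀ i j,
      isTEdge Wp Wn (ξ + lam • eJ J) i j ↔
        isTEdge Wp Wn (ξ + μ • eJ J) i j ∧ ¬(i = k ∧ j = z) :=
  hbr.exists_forall_isTEdge_iff hseg.pos
    (fun _ h₀ h₁ => hseg.isRegularAlong hsign hrow hgen hK h₀ h₁)
    fun _ h₀ h₁ _ hi => hseg.tangentNbrs_eq_or_eq_sdiff hsign hrow hgen hK h₀ h₁ hi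

theorem exists_leaving (hbr : IsBreakNode Wp Wn K ξ k) (hseg : IsEdgeSegment Wp Wn K ξ J μ)
    (hsign : ∀ i j, min (Wp i j) (Wn i j) = ⊥) (hrow : ∀ i ∈ K, ∃ j, tmod Wp Wn i j ≠ ⊥)
    (hgen : TropGeneric (tmod Wp Wn)) (hK : #K + 1 = n) :
    ∃ z, tangentNbrs Wp Wn ξ k \ J = {z} ∧ ∀ lam, 0 < lam → lam < μ → ∀ i j,
      isTEdge Wp Wn (ξ + lam • eJ J) i j ↔ isTEdge Wp Wn ξ i j ∧ ¬(i = k ∧ j = z) := by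
  rw [sdiff_eq_inter_compl]
  refine hbr.exists_forall_isTEdge_iff hseg.pos
    (fun _ h₀ h₁ => hseg.isRegularAlong hsign hrow hgen hK h₀ h₁) fun lam h₀ h₁ i hi => ?_
  rw [sdiff_compl]
  exact hseg.tangentNbrs_eq_or_eq_inter hsign hrow hgen hK h₀ h₁ hi

end IsBreakNode

end EdgeExchange

section EnteringArc

variable {m n : ℕ} {Wp Wn : Fin m → Fin (n + 1) → TT} {w : Fin (n + 1) → TT}
  {ξ : Fin (n + 1) → ℝ} {k : Fin m} {J : Finset (Fin (n + 1))} {j l : Fin (n + 1)} {μ : ℝ}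

theorem add_smul_eJ_apply_of_mem (hj : j ∈ J) :
    w j + ((ξ + μ • eJ J) j : TT) = w j + (ξ j : TT) + (μ : TT) := by
  simp [eJ_of_mem hj, add_assoc]

theorem sup_eq_add_of_mem_rowArgmax (hl : l ∈ rowArgmax w (ξ + μ • eJ J)) (hlJ : l ∈ J) :
    (J.sup fun j => w j + (ξ j : TT)) = w l + (ξ l : TT) := by
  refine le_antisymm (Finset.sup_le fun j hj => ?_)
    (Finset.le_sup (f := fun j => w j + (ξ j : TT)) hlJ)
  have hjl := (mem_rowArgmax.mp hl).2 j
  rwa [add_smul_eJ_apply_of_mem hj, add_smul_eJ_apply_of_mem hlJ,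
    WithBot.add_le_add_iff_right WithBot.coe_ne_bot] at hjl

theorem add_eq_sup_iff_mem_rowArgmax (hl : l ∈ rowArgmax w (ξ + μ • eJ J)) (hlJ : l ∈ J)
    (hj : j ∈ J) : (w j + (ξ j : TT) = J.sup fun j => w j + (ξ j : TT)) ↔
      j ∈ rowArgmax w (ξ + μ • eJ J) := by
  rw [sup_eq_add_of_mem_rowArgmax hl hlJ]
  constructor
  · intro heq
    obtain ⟨hne, hmax⟩ := mem_rowArgmax.mp hl
    refine mem_rowArgmax.mpr ⟨fun hbot => hne ?_, fun t => (hmax t).trans_eq ?_⟩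
    · simpa [hbot] using heq.symm
    · rw [add_smul_eJ_apply_of_mem hj, add_smul_eJ_apply_of_mem hlJ, heq]
  · intro hjmem
    have heq := add_eq_add_of_mem_rowArgmax hjmem hl
    rw [add_smul_eJ_apply_of_mem hj, add_smul_eJ_apply_of_mem hlJ] at heq
    exact WithBot.add_right_cancel WithBot.coe_ne_bot heq

theorem sup_lt_sup_iff_of_unique_max {κ : Type*} {a b : κ → TT} {x : κ → ℝ} {J : Finset κ} {l : κ}
    (hsign : min (a l) (b l) = ⊥) (hlJ : l ∈ J)
    (hlt : ∀ j ∈ J, j ≠ l → max (a j) (b j) + (x j : TT) < max (a l) (b l) + (x l : TT)) :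
    ((J.sup fun j => b j + (x j : TT)) < J.sup fun j => a j + (x j : TT)) ↔ a l ≠ ⊥ := by
  have hle : ∀ c : κ → TT, c l + (x l : TT) ≤ J.sup fun j => c j + (x j : TT) := fun c =>
    Finset.le_sup (f := fun j => c j + (x j : TT)) hlJ
  constructor
  · rintro hsup ha
    refine hsup.not_ge ((Finset.sup_le fun j hj => ?_).trans (hle b))
    by_cases hjl : j = l
    · simp [hjl, ha]
    · have hj := hlt j hj hjl
      rw [ha, bot_sup_eq] at hj
      exact (add_le_add_left (le_max_left _ _) _).trans hj.le
  · intro ha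
    have hb : b l = ⊥ := (_root_.min_eq_bot.mp hsign).resolve_left ha
    have hbot : ⊥ < a l + (x l : TT) := by simpa [bot_lt_iff_ne_bot] using ha
    refine lt_of_lt_of_le ((Finset.sup_lt_iff hbot).mpr fun j hj => ?_) (hle a)
    by_cases hjl : j = l
    · simpa [hjl, hb] using hbot
    · have hj := hlt j hj hjl
      rw [hb, sup_bot_eq] at hj
      exact (add_le_add_left (le_max_right _ _) _).trans_lt hj

theorem tE_sub_lt_tE_sub_iff {c a b : TT} (hc : c ≠ ⊥) : tE c - tE a < tE c - tE b ↔ b < a := by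
  obtain ⟨r, rfl⟩ := WithBot.ne_bot_iff_exists.mp hc
  induction a using WithBot.recBotCoe with
  | bot => simp [tE]
  | coe a =>
    induction b using WithBot.recBotCoe with
    | bot =>
      simp only [tE, WithBot.recBotCoe_coe, WithBot.recBotCoe_bot,
        EReal.sub_bot (EReal.coe_ne_bot r), WithBot.bot_lt_coe, iff_true]
      exact_mod_cast EReal.coe_lt_top (r - a)
    | coe b =>
      simp only [tE, WithBot.recBotCoe_coe]
      exact_mod_cast sub_lt_sub_iff_left r

theorem lamP_lt_lamM_iff (hsign : ∀ i j, min (Wp i j) (Wn i j) = ⊥)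
    (hk : isHypNode Wp Wn ξ k) (hl : tangentNbrs Wp Wn (ξ + μ • eJ J) k ∩ J = {l}) :
    lamP Wp k ξ J < lamM Wp Wn k ξ J ↔ Wp k l ≠ ⊥ := by
  obtain ⟨hlT, hlJ⟩ := mem_inter.mp (hl ▸ mem_singleton_self l)
  rw [lamP, lamM, tE_sub_lt_tE_sub_iff hk.2.ne']
  refine sup_lt_sup_iff_of_unique_max (hsign k l) hlJ fun j hj hjl => ?_
  have hle : tmod Wp Wn k j + (ξ j : TT) ≤ J.sup fun j => tmod Wp Wn k j + (ξ j : TT) :=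
    Finset.le_sup (f := fun j => tmod Wp Wn k j + (ξ j : TT)) hj
  have hne : tmod Wp Wn k j + (ξ j : TT) ≠ J.sup fun j => tmod Wp Wn k j + (ξ j : TT) := fun heq =>
    hjl (mem_singleton.mp (hl ▸ mem_inter.mpr
      ⟨(add_eq_sup_iff_mem_rowArgmax hlT hlJ hj).mp heq, hj⟩))
  exact (hle.lt_of_ne hne).trans_eq (sup_eq_add_of_mem_rowArgmax hlT hlJ)

end EnteringArc

section Digraph

variable {m n : ℕ} {Wp Wn : Fin m → Fin (n + 1) → TT} {K : Finset (Fin m)}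
  {x y : Fin (n + 1) → ℝ} {k : Fin m} {J : Finset (Fin (n + 1))} {z : Fin (n + 1)}

theorem arcRel_iff_and_not (hE : ∀ i j, isTEdge Wp Wn y i j ↔
      isTEdge Wp Wn x i j ∧ ¬(i = k ∧ j = z)) (u v : TGV m n) :
    arcRel Wp Wn y u v ↔ arcRel Wp Wn x u v ∧
      ¬((u = Sum.inr z ∧ v = Sum.inl k) ∨ (u = Sum.inl k ∧ v = Sum.inr z)) := by
  rcases u with i | j <;> rcases v with i' | j' <;> simp [arcRel, hE] <;> tauto

theorem arcRel_iff_or (hsign : ∀ i j, min (Wp i j) (Wn i j) = ⊥) (hz : isTEdge Wp Wn x k z)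
    (hE : ∀ i j, isTEdge Wp Wn y i j ↔ isTEdge Wp Wn x i j ∧ ¬(i = k ∧ j = z)) (u v : TGV m n) :
    arcRel Wp Wn x u v ↔ arcRel Wp Wn y u v ∨ (Wp k z ≠ ⊥ ∧ u = Sum.inr z ∧ v = Sum.inl k) ∨
      (¬ Wp k z ≠ ⊥ ∧ u = Sum.inl k ∧ v = Sum.inr z) := by
  have hneg := ne_bot_right_iff hsign (isTEdge_iff.mp hz).2
  rcases u with i | j <;> rcases v with i' | j' <;> simp [arcRel, hE] <;> grind

theorem eq_of_card_eq_three_of_same_side {κ : Type*} {T : Finset κ} (hT : #T = 3) {P : κ → Prop}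
    {l z a c : κ} (hl : l ∈ T) (hz : z ∈ T) (hzl : z ≠ l) (hPl : P l)
    (ha : a ∈ T) (hal : a ≠ l) (hPa : P a) (hc : c ∈ T) (hcz : c ≠ z) (hPc : ¬ P c) :
    P z ∧ ∀ j ∈ T, j ≠ l → P j → j = z := by
  have hTeq : T = {l, z, c} := by
    refine (eq_of_subset_of_card_le (by grind) ?_).symm
    rw [hT, card_eq_three.mpr ⟨l, z, c, hzl.symm, by grind, hcz.symm, rfl⟩]
  grind

theorem delEdge_eq_incidenceGraph (hE : ∀ i j, isTEdge Wp Wn y i j ↔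
      isTEdge Wp Wn x i j ∧ ¬(i = k ∧ j = z)) :
    delEdge Wp Wn x k z = incidenceGraph fun i => {j | isTEdge Wp Wn y i j} := by
  refine congrArg SimpleGraph.fromRel (funext₂ fun u v => propext ?_)
  rcases u with i | j <;> rcases v with i' | j' <;> simp [tedgeRel, hE]

theorem IsRegularAlong.filter_reachable_eq (hreg : IsRegularAlong Wp Wn K y J)
    (hgen : TropGeneric (tmod Wp Wn)) (hK : #K + 1 = n) (hJ : J ≠ univ) (hk : k ∈ K)
    (hkJ : tangentNbrs Wp Wn y k ⊆ J) :
    ({l | (incidenceGraph fun i => {j | isTEdge Wp Wn y i j}).Reachable (Sum.inl k) (Sum.inr l)} :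
      Finset (Fin (n + 1))) = J := by
  set G := incidenceGraph fun i => {j | isTEdge Wp Wn y i j}
  have hedge : ∀ {i j}, isTEdge Wp Wn y i j ↔ i ∈ K ∧ j ∈ tangentNbrs Wp Wn y i := by
    rw [← hreg.hypNodes_eq]
    exact isTEdge_iff
  have hadj : ∀ {i j}, i ∈ K → j ∈ tangentNbrs Wp Wn y i → G.Adj (Sum.inl i) (Sum.inr j) :=
    fun hi hj => incidenceGraph_adj_inl_inr.mpr (by simpa using hedge.mpr ⟨hi, hj⟩)
  obtain ⟨t, ht⟩ : (tangentNbrs Wp Wn y k).Nonempty := by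
    rw [← card_pos, hreg.card_eq_two k hk]
    exact two_pos
  refine hreg.eq_of_oneSided hgen hK hJ ⟨t, by simpa using (hadj hk ht).reachable⟩ ?_ ?_
  · intro l hl
    let ψ : Fin m ⊕ Fin (n + 1) → Prop :=
      Sum.elim (fun i => ∃ j ∈ tangentNbrs Wp Wn y i, j ∈ J) (· ∈ J)
    have hψ : ∀ i, ∀ j ∈ ({j | isTEdge Wp Wn y i j} : Finset _), ψ (Sum.inl i) = ψ (Sum.inr j) := by
      intro i j hj
      obtain ⟨hi, hj⟩ := hedge.mp (by simpa using hj)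
      exact propext ⟨fun ⟨a, ha, haJ⟩ => ((hreg.oneSided i hi).mem_iff_mem ha hj).mp haJ,
        fun hjJ => ⟨j, hj, hjJ⟩⟩
    exact (eq_of_reachable_of_forall_adj_eq (fun _ _ => eq_of_incidenceGraph_adj hψ)
      (mem_filter.mp hl).2).mp ⟨t, ht, hkJ ht⟩
  · intro i hi
    by_contra hside
    obtain ⟨a, ha, b, hb, haS, hbS⟩ := not_oneSided_iff.mp hside
    refine hbS (mem_filter.mpr ⟨mem_univ b, (mem_filter.mp haS).2.trans ?_⟩)
    exact (hadj hi ha).symm.reachable.trans (hadj hi hb).reachable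

theorem IsRegularAlong.reachJ_eq (hreg : IsRegularAlong Wp Wn K y J)
    (hgen : TropGeneric (tmod Wp Wn)) (hK : #K + 1 = n) (hJ : J ≠ univ) (hk : k ∈ K)
    (hz : tangentNbrs Wp Wn x k \ J = {z})
    (hE : ∀ i j, isTEdge Wp Wn y i j ↔ isTEdge Wp Wn x i j ∧ ¬(i = k ∧ j = z)) :
    reachJ Wp Wn x k z = J := by
  rw [reachJ, delEdge_eq_incidenceGraph hE]
  refine hreg.filter_reachable_eq hgen hK hJ hk fun j hj => ?_
  obtain ⟨hjx, hjz⟩ := (hE k j).mp (isTEdge_iff.mpr ⟨hreg.hypNodes_eq ▸ hk, hj⟩)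
  by_contra hjJ
  exact hjz ⟨rfl, mem_singleton.mp (hz ▸ mem_sdiff.mpr ⟨(isTEdge_iff.mp hjx).2, hjJ⟩)⟩

theorem exists_isTEdge_pos (h : isHypNode Wp Wn x k) : ∃ j, isTEdge Wp Wn x k j ∧ Wp k j ≠ ⊥ := by
  obtain ⟨j, hj, hpos⟩ := exists_mem_tangentNbrs_pos (exists_tmod_ne_bot_of_isHypNode h) (Eq.ge h.1)
  exact ⟨j, isTEdge_iff.mpr ⟨mem_hypNodes.mpr h, hj⟩, hpos⟩

theorem exists_isTEdge_neg (h : isHypNode Wp Wn x k) : ∃ j, isTEdge Wp Wn x k j ∧ Wn k j ≠ ⊥ := by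
  obtain ⟨j, hj, hneg⟩ := exists_mem_tangentNbrs_neg (exists_tmod_ne_bot_of_isHypNode h) h.1
  exact ⟨j, isTEdge_iff.mpr ⟨mem_hypNodes.mpr h, hj⟩, hneg⟩

namespace IsBreakNode

theorem isTEdge_iff_mem (hbr : IsBreakNode Wp Wn K x k) {j : Fin (n + 1)} :
    isTEdge Wp Wn x k j ↔ j ∈ tangentNbrs Wp Wn x k := by
  rw [isTEdge_iff, hbr.hypNodes_eq, and_iff_right hbr.mem]

/- Removing either edge leaves `k` with one arc of each orientation, so the two edges are oriented
alike and the third arc at `k` the other way. -/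
theorem leaving_arc_same_orientation (hbr : IsBreakNode Wp Wn K x k)
    (hsign : ∀ i j, min (Wp i j) (Wn i j) = ⊥) {y' : Fin (n + 1) → ℝ} {l : Fin (n + 1)}
    (hy : isHypNode Wp Wn y k) (hy' : isHypNode Wp Wn y' k)
    (hl : l ∈ tangentNbrs Wp Wn x k) (hz : z ∈ tangentNbrs Wp Wn x k) (hzl : z ≠ l)
    (hE : ∀ i j, isTEdge Wp Wn y i j ↔ isTEdge Wp Wn x i j ∧ ¬(i = k ∧ j = l))
    (hE' : ∀ i j, isTEdge Wp Wn y' i j ↔ isTEdge Wp Wn x i j ∧ ¬(i = k ∧ j = z)) :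
    (Wp k l ≠ ⊥ → arcRel Wp Wn x (Sum.inr z) (Sum.inl k) ∧
      ∀ j, j ≠ l → arcRel Wp Wn x (Sum.inr j) (Sum.inl k) → j = z) ∧
    (¬ Wp k l ≠ ⊥ → arcRel Wp Wn x (Sum.inl k) (Sum.inr z) ∧
      ∀ j, j ≠ l → arcRel Wp Wn x (Sum.inl k) (Sum.inr j) → j = z) := by
  have hneg : ∀ {j}, j ∈ tangentNbrs Wp Wn x k → (Wn k j ≠ ⊥ ↔ Wp k j = ⊥) :=
    ne_bot_right_iff hsign
  have mem_of_edge : ∀ {j}, isTEdge Wp Wn y k j → j ∈ tangentNbrs Wp Wn x k ∧ j ≠ l := fun h =>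
    have ⟨hx, hne⟩ := (hE k _).mp h
    ⟨hbr.isTEdge_iff_mem.mp hx, fun heq => hne ⟨rfl, heq⟩⟩
  have mem_of_edge' : ∀ {j}, isTEdge Wp Wn y' k j → j ∈ tangentNbrs Wp Wn x k ∧ j ≠ z := fun h =>
    have ⟨hx, hne⟩ := (hE' k _).mp h
    ⟨hbr.isTEdge_iff_mem.mp hx, fun heq => hne ⟨rfl, heq⟩⟩
  obtain ⟨p, hpE, hp⟩ := exists_isTEdge_pos hy
  obtain ⟨q, hqE, hq⟩ := exists_isTEdge_neg hy
  obtain ⟨p', hpE', hp'⟩ := exists_isTEdge_pos hy'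
  obtain ⟨q', hqE', hq'⟩ := exists_isTEdge_neg hy'
  obtain ⟨hpT, hpl⟩ := mem_of_edge hpE
  obtain ⟨hqT, hql⟩ := mem_of_edge hqE
  obtain ⟨hpT', hpz⟩ := mem_of_edge' hpE'
  obtain ⟨hqT', hqz⟩ := mem_of_edge' hqE'
  constructor
  · intro hWl
    obtain ⟨hWz, huniq⟩ := eq_of_card_eq_three_of_same_side hbr.card_eq_three
      (P := fun j => Wp k j ≠ ⊥) hl hz hzl hWl hpT hpl hp hqT' hqz
      (not_not.mpr ((hneg hqT').mp hq'))
    exact ⟨⟨hbr.isTEdge_iff_mem.mpr hz, hWz⟩,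
      fun j hjl harc => huniq j (hbr.isTEdge_iff_mem.mp harc.1) hjl harc.2⟩
  · intro hWl
    obtain ⟨hWz, huniq⟩ := eq_of_card_eq_three_of_same_side hbr.card_eq_three
      (P := fun j => Wn k j ≠ ⊥) hl hz hzl ((hneg hl).mpr (not_not.mp hWl)) hqT hql hq hpT' hpz
      fun h => hp' ((hneg hpT').mp h)
    exact ⟨⟨hbr.isTEdge_iff_mem.mpr hz, hWz⟩,
      fun j hjl harc => huniq j (hbr.isTEdge_iff_mem.mp harc.1) hjl harc.2⟩

end IsBreakNode

end Digraph

theorem stmt16_general {m n : ℕ} (Wp Wn : Fin m → Fin (n + 1) → TT)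
    (hsign : ∀ i j, min (Wp i j) (Wn i j) = ⊥)
    (hgen : TropGeneric (tmod Wp Wn))
    (K : Finset (Fin m)) (hrow : ∀ i ∈ K, ∃ j, max (Wp i j) (Wn i j) ≠ ⊥)
    (hK : K.card + 1 = n)
    (ξ : Fin (n + 1) → ℝ) (J : Finset (Fin (n + 1))) (μ : ℝ)
    (hseg : IsEdgeSegment Wp Wn K ξ J μ)
    (ξ' : Fin (n + 1) → ℝ) (hξ' : ξ' = ξ + μ • eJ J)
    (k : Fin m) (hk : deg21 Wp Wn ξ' k ∨ deg12 Wp Wn ξ' k)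
    (J' : Finset (Fin (n + 1))) (μ' : ℝ)
    (hseg' : IsEdgeSegment Wp Wn K ξ' J' μ') (hJJ' : J ⊆ J') :
    ∃ ℓc : Fin (n + 1), ℓc ∈ J ∧
      (tmod Wp Wn k ℓc + (ξ ℓc : TT) = J.sup fun j => tmod Wp Wn k j + (ξ j : TT)) ∧
      (∀ j ∈ J,
        (tmod Wp Wn k j + (ξ j : TT) = J.sup fun j' => tmod Wp Wn k j' + (ξ j' : TT)) →
        j = ℓc) ∧
      (∀ lam : ℝ, 0 < lam → lam < μ → ∀ u v,
        arcRel Wp Wn ξ' u v ↔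
          (arcRel Wp Wn (ξ + lam • eJ J) u v ∨
           (lamP Wp k ξ J < lamM Wp Wn k ξ J ∧ u = Sum.inr ℓc ∧ v = Sum.inl k) ∨
           (¬ lamP Wp k ξ J < lamM Wp Wn k ξ J ∧ u = Sum.inl k ∧ v = Sum.inr ℓc))) ∧
      ∃ jlev : Fin (n + 1), jlev ≠ ℓc ∧
        ((lamP Wp k ξ J < lamM Wp Wn k ξ J →
           arcRel Wp Wn ξ' (Sum.inr jlev) (Sum.inl k) ∧
           ∀ j, j ≠ ℓc → arcRel Wp Wn ξ' (Sum.inr j) (Sum.inl k) → j = jlev) ∧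
         (¬ lamP Wp k ξ J < lamM Wp Wn k ξ J →
           arcRel Wp Wn ξ' (Sum.inl k) (Sum.inr jlev) ∧
           ∀ j, j ≠ ℓc → arcRel Wp Wn ξ' (Sum.inl k) (Sum.inr j) → j = jlev)) ∧
        (∀ lam' : ℝ, 0 < lam' → lam' < μ' → ∀ u v,
          arcRel Wp Wn (ξ' + lam' • eJ J') u v ↔
            (arcRel Wp Wn ξ' u v ∧
             ¬((u = Sum.inr jlev ∧ v = Sum.inl k) ∨
               (u = Sum.inl k ∧ v = Sum.inr jlev)))) ∧
        J' = reachJ Wp Wn ξ' k jlev := by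
  subst hξ'
  have hbr := isBreakNode_of_deg hsign hrow hgen hK hseg'.mem_left hk
  have hhyp : ∀ {x}, toT x ∈ edgeEK Wp Wn K → isHypNode Wp Wn x k := fun hx =>
    mem_hypNodes.mp (subset_hypNodes_of_mem_edgeEK hrow hx hbr.mem)
  obtain ⟨ℓ, hℓ, hent⟩ := hbr.exists_entering hseg hsign hrow hgen hK
  obtain ⟨z, hz, hlev⟩ := hbr.exists_leaving hseg' hsign hrow hgen hK
  obtain ⟨hℓT, hℓJ⟩ := mem_inter.mp (hℓ ▸ mem_singleton_self ℓ)
  obtain ⟨hzT, hzJ'⟩ := mem_sdiff.mp (hz ▸ mem_singleton_self z)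
  have hzℓ : z ≠ ℓ := fun h => hzJ' (hJJ' (h ▸ hℓJ))
  have hmid : 0 < μ / 2 ∧ μ / 2 < μ := ⟨half_pos hseg.pos, half_lt_self hseg.pos⟩
  have hmid' : 0 < μ' / 2 ∧ μ' / 2 < μ' := ⟨half_pos hseg'.pos, half_lt_self hseg'.pos⟩
  simp only [lamP_lt_lamM_iff hsign (hhyp hseg.mem_left) hℓ]
  refine ⟨ℓ, hℓJ, (add_eq_sup_iff_mem_rowArgmax hℓT hℓJ hℓJ).mpr hℓT, fun j hj hmax => ?_,
    fun lam h₀ h₁ => arcRel_iff_or hsign (hbr.isTEdge_iff_mem.mpr hℓT) (hent lam h₀ h₁),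
    z, hzℓ, ?_, fun lam h₀ h₁ => arcRel_iff_and_not (hlev lam h₀ h₁), ?_⟩
  · exact mem_singleton.mp
      (hℓ ▸ mem_inter.mpr ⟨(add_eq_sup_iff_mem_rowArgmax hℓT hℓJ hj).mp hmax, hj⟩)
  · exact hbr.leaving_arc_same_orientation hsign (hhyp (hseg.mem _ hmid.1.le hmid.2.le))
      (hhyp (hseg'.mem _ hmid'.1.le hmid'.2.le)) hℓT hzT hzℓ (hent _ hmid.1 hmid.2)
      (hlev _ hmid'.1 hmid'.2)
  · exact ((hseg'.isRegularAlong hsign hrow hgen hK hmid'.1 hmid'.2).reachJ_eq hgen hK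
      hseg'.ne_univ hbr.mem hz (hlev _ hmid'.1 hmid'.2)).symm

/-- Updating the tangent digraph at a breakpoint `ξ'` of
`E_K`: (a) `D_{ξ'} = D_{]ξ,ξ'[} ∪ {a_ent}` where `a_ent` joins the node `k`
of degree `(2,1)`/`(1,2)` and the unique `ℓc ∈ argmax_{j∈J}(|W|_{kj}+ξ_j)`,
oriented by comparing `λ⁺_k` and `λ⁻_k`; (b) `D_{]ξ',ξ''[} = D_{ξ'} ∖ {a_lev}`
where `a_lev` is the unique other arc at `k` with the same orientation;
(c) the next direction set `J'` is the set of coordinate nodes weakly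
connected to `k` after deleting `a_lev`. -/
theorem stmt16 {m n : ℕ} (Wp Wn : Fin m → Fin (n + 1) → TT)
    (hsign : ∀ i j, min (Wp i j) (Wn i j) = ⊥)
    (hrow : ∀ i, ∃ j, max (Wp i j) (Wn i j) ≠ ⊥)
    (hgen : TropGeneric (tmod Wp Wn))
    (hfin : ∀ x ∈ coneC Wp Wn, x ≠ (fun _ => (⊥ : TT)) → ∀ j, x j ≠ ⊥)
    (K : Finset (Fin m)) (hK : K.card + 1 = n)
    (hU : ∃ (er : Fin K.card → Fin m) (ec : Fin K.card → Fin (n + 1)),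
      Function.Injective er ∧ (∀ a, er a ∈ K) ∧ Function.Injective ec ∧
      (∀ a, ec a ≠ Fin.last n) ∧ ⊥ < tper (fun a b => tmod Wp Wn (er a) (ec b)))
    (hEK : ∃ y : Fin (n + 1) → ℝ, toT y ∈ edgeEK Wp Wn K)
    (ξ : Fin (n + 1) → ℝ) (J : Finset (Fin (n + 1))) (μ : ℝ)
    (hseg : IsOrdSeg Wp Wn K ξ J μ)
    (ξ' : Fin (n + 1) → ℝ) (hξ' : ξ' = ξ + μ • eJ J)
    (hbp : IsBreakpoint Wp Wn K ξ')
    (k : Fin m) (hk : deg21 Wp Wn ξ' k ∨ deg12 Wp Wn ξ' k)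
    (J' : Finset (Fin (n + 1))) (μ' : ℝ)
    (hseg' : IsOrdSeg Wp Wn K ξ' J' μ') (hJJ' : J ⊂ J') :
    ∃ ℓc : Fin (n + 1), ℓc ∈ J ∧
      (tmod Wp Wn k ℓc + (ξ ℓc : TT) = J.sup fun j => tmod Wp Wn k j + (ξ j : TT)) ∧
      (∀ j ∈ J,
        (tmod Wp Wn k j + (ξ j : TT) = J.sup fun j' => tmod Wp Wn k j' + (ξ j' : TT)) →
        j = ℓc) ∧
      (∀ lam : ℝ, 0 < lam → lam < μ → ∀ u v,
        arcRel Wp Wn ξ' u v ↔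
          (arcRel Wp Wn (ξ + lam • eJ J) u v ∨
           (lamP Wp k ξ J < lamM Wp Wn k ξ J ∧ u = Sum.inr ℓc ∧ v = Sum.inl k) ∨
           (¬ lamP Wp k ξ J < lamM Wp Wn k ξ J ∧ u = Sum.inl k ∧ v = Sum.inr ℓc))) ∧
      ∃ jlev : Fin (n + 1), jlev ≠ ℓc ∧
        ((lamP Wp k ξ J < lamM Wp Wn k ξ J →
           arcRel Wp Wn ξ' (Sum.inr jlev) (Sum.inl k) ∧
           ∀ j, j ≠ ℓc → arcRel Wp Wn ξ' (Sum.inr j) (Sum.inl k) → j = jlev) ∧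
         (¬ lamP Wp k ξ J < lamM Wp Wn k ξ J →
           arcRel Wp Wn ξ' (Sum.inl k) (Sum.inr jlev) ∧
           ∀ j, j ≠ ℓc → arcRel Wp Wn ξ' (Sum.inl k) (Sum.inr j) → j = jlev)) ∧
        (∀ lam' : ℝ, 0 < lam' → lam' < μ' → ∀ u v,
          arcRel Wp Wn (ξ' + lam' • eJ J') u v ↔
            (arcRel Wp Wn ξ' u v ∧
             ¬((u = Sum.inr jlev ∧ v = Sum.inl k) ∨
               (u = Sum.inl k ∧ v = Sum.inr jlev)))) ∧
        J' = reachJ Wp Wn ξ' k jlev := by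
  exact stmt16_general Wp Wn hsign hgen K (fun i _ => hrow i) hK ξ J μ hseg.isEdgeSegment ξ'
    hξ' k hk J' μ' hseg'.isEdgeSegment hJJ'.subset
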